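/- arXiv:2106.02755 — 9 statements merged into one kernel-verified Lean document; each statement's English description precedes it below -/
import Mathlib

section
/- Let ρ > 1 and let E_ρ be the open region in ℂ bounded by the image of the circle {z ∈ ℂ : |z| = ρ} under the map z ↦ z + z⁻¹ + 2 (the Bernstein ellipse of parameter ρ around the interval [0,4]). Suppose f : ℂ → ℂ is analytic on E_ρ, bounded on E_ρ with M = sup_{z ∈ E_ρ} |f(z)| < ∞, and real-valued on [0,4]. Then for every n ∈ ℕ there exists a real polynomial p of degree at most n such that |f(t) − p(t)| ≤ (2M/(ρ−1))·ρ^{−n} for all t ∈ [0,4]. -/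
/-- The (open) Bernstein ellipse of parameter `ρ > 1` around the interval `[0,4]`:
the open region in `ℂ` bounded by the image of the circle `{|z| = ρ}` under
`z ↦ z + z⁻¹ + 2`.  It is realized as the image of the annulus `1 ≤ |z| < ρ`
under this map (the unit circle maps onto `[0,4]`). -/
noncomputable def bernsteinEllipse (ρ : ℝ) : Set ℂ :=
  (fun z : ℂ => z + z⁻¹ + 2) '' {z : ℂ | 1 ≤ ‖z‖ ∧ ‖z‖ < ρ}

/-!
The map `z ↦ z + z⁻¹ + 2` pulls `f` back to a function `F` that is holomorphic and bounded by `M`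
on the annulus `ρ⁻¹ < ‖z‖ < ρ` and invariant under `z ↦ z⁻¹`. Shifting the circle of integration
to the two boundary radii bounds the `k`-th Laurent coefficient of `F` by `M ρ^{-|k|}`. On the unit
circle, averaging the Laurent series at `w` and `w⁻¹` turns `w ^ k` into a Chebyshev polynomial in
`(w + w⁻¹) / 2`, so `f` has a Chebyshev series on `[0, 4]` whose tail beyond degree `n` is at most
`2 M ∑_{k > n} ρ^{-k} = 2 M ρ^{-n} / (ρ - 1)`.
-/

open Metric Polynomial Real Set
open scoped Topology

/-- The open annulus `r < ‖z‖ < R` centred at the origin. -/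
def annulus (r R : ℝ) : Set ℂ :=
  {z | ‖z‖ ∈ Ioo r R}

theorem isOpen_annulus (r R : ℝ) : IsOpen (annulus r R) :=
  isOpen_Ioo.preimage continuous_norm

theorem sphere_subset_annulus {r s R : ℝ} (hs : s ∈ Ioo r R) : sphere 0 s ⊆ annulus r R :=
  fun z hz ↦ by rwa [annulus, mem_ofPred_eq, mem_sphere_zero_iff_norm.1 hz]

theorem ne_zero_of_mem_annulus {r R : ℝ} (hr : 0 ≤ r) {z : ℂ} (hz : z ∈ annulus r R) : z ≠ 0 :=
  norm_pos_iff.1 (hr.trans_lt hz.1)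

theorem norm_circleAverage_le {E : Type*} [NormedAddCommGroup E] [NormedSpace ℝ E] {f : ℂ → E}
    {c : ℂ} {R C : ℝ} (hf : ∀ z ∈ sphere c |R|, ‖f z‖ ≤ C) : ‖circleAverage f c R‖ ≤ C := by
  have hint := intervalIntegral.norm_integral_le_of_norm_le_const (a := 0) (b := 2 * π)
    fun θ _ ↦ hf (circleMap c R θ) (circleMap_mem_sphere' c R θ)
  rw [sub_zero, abs_of_pos two_pi_pos] at hint
  rw [circleAverage, norm_smul, norm_of_nonneg (inv_nonneg.2 two_pi_pos.le)]
  exact (inv_mul_le_iff₀' two_pi_pos).2 hint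

section LaurentCoefficients

variable {E : Type*} [NormedAddCommGroup E] [NormedSpace ℂ E]

theorem circleAverage_eq_of_differentiableOn_annulus {F : ℂ → E} {r R s t : ℝ} (hr : 0 ≤ r)
    (hF : DifferentiableOn ℂ F (annulus r R)) (hs : s ∈ Ioo r R) (ht : t ∈ Ioo r R) :
    circleAverage F 0 s = circleAverage F 0 t := by
  wlog hst : s ≤ t generalizing s t
  · exact (this ht hs (le_of_not_ge hst)).symm
  have hs₀ : 0 < s := hr.trans_lt hs.1
  have hclosed : closedBall 0 t \ ball 0 s ⊆ annulus r R := fun z hz ↦ by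
    simp only [mem_sdiff, mem_closedBall_zero_iff, mem_ball_zero_iff, not_lt] at hz
    exact ⟨hs.1.trans_le hz.2, hz.1.trans_lt ht.2⟩
  have hopen : ball 0 t \ closedBall 0 s ⊆ annulus r R :=
    (sdiff_subset_sdiff ball_subset_closedBall ball_subset_closedBall).trans hclosed
  rw [circleAverage_eq_circleIntegral hs₀.ne',
    circleAverage_eq_circleIntegral (hs₀.trans_le hst).ne',
    Complex.circleIntegral_sub_center_inv_smul_eq_of_differentiable_on_annulus_off_countable hs₀ hst
      countable_empty (hF.continuousOn.mono hclosed) fun z hz ↦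
        hF.differentiableAt ((isOpen_annulus r R).mem_nhds (hopen hz.1))]

/-- The coefficient of `z ^ k` in the Laurent expansion of `F` around `0`, computed on the unit
circle: `(2 * π * I)⁻¹ ∮ z ^ (-k - 1) • F z dz`, written as the mean of `z ^ (-k) • F z`. -/
noncomputable def laurentCoeff (F : ℂ → E) (k : ℤ) : E :=
  circleAverage (fun z ↦ z ^ (-k) • F z) 0 1

theorem norm_laurentCoeff_le {F : ℂ → E} {r R s M : ℝ} (hr : 0 < r) (hrR : 1 ∈ Ioo r R)
    (hF : DifferentiableOn ℂ F (annulus r R)) (hM : ∀ z ∈ annulus r R, ‖F z‖ ≤ M)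
    (hs : s ∈ Icc r R) (k : ℤ) : ‖laurentCoeff F k‖ ≤ M * s ^ (-k) := by
  have hdiff : DifferentiableOn ℂ (fun z ↦ z ^ (-k) • F z) (annulus r R) := fun z hz ↦
    (differentiableAt_zpow.2 (.inl (ne_zero_of_mem_annulus hr.le hz))).differentiableWithinAt.smul
      (hF z hz)
  have hinterior : ∀ t ∈ Ioo r R, ‖laurentCoeff F k‖ ≤ M * t ^ (-k) := by
    intro t ht
    have ht₀ : 0 < t := hr.trans ht.1
    rw [laurentCoeff, circleAverage_eq_of_differentiableOn_annulus hr.le hdiff hrR ht]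
    refine norm_circleAverage_le fun z hz ↦ ?_
    rw [abs_of_pos ht₀] at hz
    rw [norm_smul, norm_zpow, mem_sphere_zero_iff_norm.1 hz, mul_comm]
    gcongr
    exact hM z (sphere_subset_annulus ht hz)
  have hcont : ContinuousAt (fun t : ℝ ↦ M * t ^ (-k)) s :=
    continuousAt_const.mul (continuousAt_zpow₀ s (-k) (.inl (hr.trans_le hs.1).ne'))
  have hs' : s ∈ closure (Ioo r R) := by rwa [closure_Ioo (hrR.1.trans hrR.2).ne]
  exact continuousWithinAt_const.closure_le hs' hcont.continuousWithinAt hinterior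

theorem norm_laurentCoeff_le_mul_inv_pow_natAbs {F : ℂ → E} {ρ M : ℝ} (hρ : 1 < ρ)
    (hF : DifferentiableOn ℂ F (annulus ρ⁻¹ ρ)) (hM : ∀ z ∈ annulus ρ⁻¹ ρ, ‖F z‖ ≤ M) (k : ℤ) :
    ‖laurentCoeff F k‖ ≤ M * ρ⁻¹ ^ k.natAbs := by
  have hρ₀ : 0 < ρ⁻¹ := by positivity
  have hone : 1 ∈ Ioo ρ⁻¹ ρ := ⟨inv_lt_one_of_one_lt₀ hρ, hρ⟩
  have hle : ρ⁻¹ ≤ ρ := (hone.1.trans hone.2).le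
  rcases Int.natAbs_eq k with hk | hk
  · have := norm_laurentCoeff_le hρ₀ hone hF hM (right_mem_Icc.2 hle) k
    rwa [hk, zpow_neg, ← inv_zpow, zpow_natCast, ← hk] at this
  · have := norm_laurentCoeff_le hρ₀ hone hF hM (left_mem_Icc.2 hle) k
    rwa [hk, neg_neg, zpow_natCast, ← hk] at this

theorem fourierCoeff_comp_toCircle {T : ℝ} [hT : Fact (0 < T)] (F : ℂ → E) (k : ℤ) :
    fourierCoeff (fun x : AddCircle T ↦ F (AddCircle.toCircle x)) k = laurentCoeff F k := by
  have hT₀ : T ≠ 0 := hT.out.ne'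
  let g : ℝ → E := fun θ ↦ circleMap 0 1 θ ^ (-k) • F (circleMap 0 1 θ)
  have hintegrand (x : ℝ) : fourier (-k) (x : AddCircle T) •
      F (AddCircle.toCircle (x : AddCircle T)) = g (2 * π / T * x) := by
    have hx : (AddCircle.toCircle (x : AddCircle T) : ℂ) = circleMap 0 1 (2 * π / T * x) := by
      simp [AddCircle.toCircle_apply_mk, circleMap]
    simp only [g, fourier_apply, AddCircle.toCircle_zsmul, Circle.coe_zpow, hx]
  calc fourierCoeff (fun x : AddCircle T ↦ F (AddCircle.toCircle x)) k
      = (1 / T) • ∫ x in 0..T, g (2 * π / T * x) := by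
        simp only [fourierCoeff_eq_intervalIntegral _ k 0, hintegrand, zero_add]
    _ = (2 * π)⁻¹ • ∫ θ in 0..2 * π, g θ := by
        rw [intervalIntegral.integral_comp_mul_left g (div_ne_zero two_pi_pos.ne' hT₀), smul_smul,
          mul_zero, div_mul_cancel₀ _ hT₀]
        congr 1
        field_simp
    _ = laurentCoeff F k := rfl

theorem hasSum_laurentCoeff_mul_zpow {F : ℂ → ℂ} (hF : ContinuousOn F (sphere 0 1))
    (hsum : Summable (laurentCoeff F)) {w : ℂ} (hw : ‖w‖ = 1) :
    HasSum (fun k : ℤ ↦ laurentCoeff F k * w ^ k) (F w) := by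
  let G : C(UnitAddCircle, ℂ) :=
    ⟨fun x ↦ F (AddCircle.toCircle x), hF.comp_continuous
      (continuous_subtype_val.comp AddCircle.continuous_toCircle)
      fun _ ↦ mem_sphere_zero_iff_norm.2 (Circle.norm_coe _)⟩
  have hG : fourierCoeff G = laurentCoeff F := funext (fourierCoeff_comp_toCircle F)
  obtain ⟨x, hx⟩ := (AddCircle.homeomorphCircle one_ne_zero).surjective
    ⟨w, mem_sphere_zero_iff_norm.2 hw⟩
  have hxw : (AddCircle.toCircle x : ℂ) = w := by
    rw [← AddCircle.homeomorphCircle_apply one_ne_zero, hx]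
  have := has_pointwise_sum_fourier_series_of_summable (f := G) (hG ▸ hsum) x
  rw [hG] at this
  simpa [G, fourier_apply, AddCircle.toCircle_zsmul, hxw] using this

end LaurentCoefficients

section GeometricDecay

variable {E : Type*} [NormedAddCommGroup E] {u : ℤ → E} {M r : ℝ}

theorem summable_of_norm_le_mul_pow_natAbs [CompleteSpace E] (hr₀ : 0 ≤ r) (hr₁ : r < 1)
    (hu : ∀ k, ‖u k‖ ≤ M * r ^ k.natAbs) : Summable u := by
  have hgeom : Summable fun k : ℕ ↦ M * r ^ k :=
    (summable_geometric_of_lt_one hr₀ hr₁).mul_left M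
  exact .of_nat_of_neg (.of_norm_bounded hgeom fun k ↦ by simpa using hu k)
    (.of_norm_bounded hgeom fun k ↦ by simpa using hu (-k))

theorem norm_sub_sum_Icc_le_of_norm_le_mul_pow_natAbs {s : E} (hr₁ : r < 1)
    (hu : ∀ k, ‖u k‖ ≤ M * r ^ k.natAbs) (hs : HasSum u s) (n : ℕ) :
    ‖s - ∑ k ∈ Finset.Icc (-n : ℤ) n, u k‖ ≤ 2 * M * r ^ (n + 1) / (1 - r) := by
  have hlim : Filter.Tendsto (fun n : ℕ ↦ ∑ k ∈ Finset.Icc (-n : ℤ) n, u k) .atTop (𝓝 s) :=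
    SummationFilter.hasSum_symmetricIcc_iff.1 (hs.mono_left SummationFilter.LeAtTop.le_atTop)
  have hstep (n : ℕ) : dist (∑ k ∈ Finset.Icc (-n : ℤ) n, u k)
      (∑ k ∈ Finset.Icc (-(n + 1 : ℕ) : ℤ) (n + 1 : ℕ), u k) ≤ 2 * M * r * r ^ n := by
    have hpos := hu (n + 1)
    have hneg := hu (-(n + 1))
    rw [Int.natAbs_neg] at hneg
    rw [show ((n : ℤ) + 1).natAbs = n + 1 from rfl, pow_succ'] at hpos hneg
    push_cast
    rw [Finset.sum_Icc_succ_eq_add_endpoints, add_comm, dist_self_add_right]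
    linarith [norm_add_le (u (n + 1)) (u (-(n + 1)))]
  have hdist := dist_le_of_le_geometric_of_tendsto r (2 * M * r) hr₁ hstep hlim n
  rwa [dist_comm, dist_eq_norm, mul_assoc (2 * M), ← pow_succ'] at hdist

end GeometricDecay

theorem chebyshev_T_eval_half_add_inv {K : Type*} [Field K] [NeZero (2 : K)] {x : K} (hx : x ≠ 0)
    (n : ℤ) : (Chebyshev.T K n).eval ((x + x⁻¹) / 2) = (x ^ n + x ^ (-n)) / 2 := by
  have h2 : (2 : K) ≠ 0 := NeZero.ne 2
  induction n using Chebyshev.induct' with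
  | zero => simp
  | one => simp
  | add_two n ih₁ ih₀ =>
    simp only [Chebyshev.T_add_two, eval_sub, eval_mul, eval_ofNat, eval_X, ih₁, ih₀, neg_add,
      zpow_add₀ hx, zpow_neg, zpow_one, zpow_natCast]
    field_simp
    ring
  | neg n ih => rw [Chebyshev.T_neg, ih, neg_neg, add_comm]

theorem norm_chebyshev_T_eval_half_add_inv_le_one {w : ℂ} (hw : ‖w‖ = 1) (n : ℤ) :
    ‖(Chebyshev.T ℂ n).eval ((w + w⁻¹) / 2)‖ ≤ 1 := by
  rw [chebyshev_T_eval_half_add_inv (norm_pos_iff.1 (hw ▸ one_pos)), norm_div, Complex.norm_two,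
    div_le_one two_pos]
  refine (norm_add_le _ _).trans_eq ?_
  rw [norm_zpow, norm_zpow, hw, one_zpow, one_zpow, one_add_one_eq_two]

theorem hasSum_laurentCoeff_mul_chebyshev_T {F : ℂ → ℂ} (hF : ContinuousOn F (sphere 0 1))
    (hsum : Summable (laurentCoeff F)) {w : ℂ} (hw : ‖w‖ = 1) (hinv : F w⁻¹ = F w) :
    HasSum (fun k : ℤ ↦ laurentCoeff F k * (Chebyshev.T ℂ k).eval ((w + w⁻¹) / 2)) (F w) := by
  have hw₀ : w ≠ 0 := norm_pos_iff.1 (hw ▸ one_pos)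
  have hw_inv := hasSum_laurentCoeff_mul_zpow hF hsum (w := w⁻¹) (by rw [norm_inv, hw, inv_one])
  rw [hinv] at hw_inv
  convert! ((hasSum_laurentCoeff_mul_zpow hF hsum hw).add hw_inv).div_const 2 using 1
  · ext k
    rw [chebyshev_T_eval_half_add_inv hw₀, inv_zpow', ← mul_add, mul_div_assoc]
  · ring

/-- The Joukowsky map `z ↦ z + z⁻¹ + 2`, which parametrizes the Bernstein ellipse around
`[0, 4]` and identifies `z` with `z⁻¹`. -/
noncomputable def joukowsky (z : ℂ) : ℂ :=
  z + z⁻¹ + 2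

theorem joukowsky_inv (z : ℂ) : joukowsky z⁻¹ = joukowsky z := by
  rw [joukowsky, joukowsky, inv_inv, add_comm z⁻¹]

theorem differentiableAt_joukowsky {z : ℂ} (hz : z ≠ 0) : DifferentiableAt ℂ joukowsky z :=
  (differentiableAt_id.add (differentiableAt_inv hz)).add_const 2

theorem mapsTo_joukowsky_annulus (ρ : ℝ) :
    MapsTo joukowsky (annulus ρ⁻¹ ρ) (bernsteinEllipse ρ) := by
  intro z ⟨hlt, hgt⟩
  rcases le_total 1 ‖z‖ with hz | hz
  · exact ⟨z, ⟨hz, hgt⟩, rfl⟩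
  · have hρ : 0 < ρ := (norm_nonneg z).trans_lt hgt
    rw [← joukowsky_inv]
    refine ⟨z⁻¹, ⟨?_, ?_⟩, rfl⟩
    · rw [norm_inv]
      exact (one_le_inv₀ ((inv_pos.2 hρ).trans hlt)).2 hz
    · rw [norm_inv]
      exact inv_lt_of_inv_lt₀ hρ hlt

theorem exists_joukowsky_eq_of_mem_Icc {t : ℝ} (ht : t ∈ Icc 0 4) :
    ∃ w : ℂ, ‖w‖ = 1 ∧ joukowsky w = t := by
  have hcos : cos (arccos ((t - 2) / 2)) = (t - 2) / 2 :=
    cos_arccos (by linarith [ht.1]) (by linarith [ht.2])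
  refine ⟨_, Complex.norm_exp_ofReal_mul_I (arccos ((t - 2) / 2)), ?_⟩
  rw [joukowsky, ← Complex.exp_neg, ← neg_mul, ← Complex.two_cos, ← Complex.ofReal_cos, hcos]
  push_cast
  ring

/-- The symmetric partial sum `∑ a k T_k((x - 2) / 2)` over `|k| ≤ n`, a polynomial in `x`. The
substitution carries `[0, 4]` to `[-1, 1]`; the index runs over `ℤ`, where `T_{-k} = T_k`, to
match Laurent coefficients. -/
noncomputable def chebyshevSum (a : ℤ → ℂ) (n : ℕ) : ℂ[X] :=
  ∑ k ∈ Finset.Icc (-n : ℤ) n, C (a k) * (Chebyshev.T ℂ k).comp (C (1 / 2) * X + C (-1))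

theorem natDegree_chebyshevSum_le (a : ℤ → ℂ) (n : ℕ) : (chebyshevSum a n).natDegree ≤ n := by
  refine natDegree_sum_le_of_forall_le _ _ fun k hk ↦ ?_
  have hkn : k.natAbs ≤ n := by grind
  calc (C (a k) * (Chebyshev.T ℂ k).comp (C (1 / 2) * X + C (-1))).natDegree
      ≤ ((Chebyshev.T ℂ k).comp (C (1 / 2) * X + C (-1))).natDegree := natDegree_C_mul_le _ _
    _ ≤ k.natAbs * 1 := by
      rw [natDegree_comp, Chebyshev.natDegree_T]
      gcongr
      exact natDegree_linear_le
    _ ≤ n := by rwa [mul_one]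

theorem eval_chebyshevSum_joukowsky (a : ℤ → ℂ) (n : ℕ) (w : ℂ) :
    (chebyshevSum a n).eval (joukowsky w) =
      ∑ k ∈ Finset.Icc (-n : ℤ) n, a k * (Chebyshev.T ℂ k).eval ((w + w⁻¹) / 2) := by
  have harg : 1 / 2 * joukowsky w + -1 = (w + w⁻¹) / 2 := by
    rw [joukowsky]
    ring
  simp only [chebyshevSum, eval_finsetSum, eval_mul, eval_comp, eval_add, eval_C, eval_X, harg]

theorem exists_real_polynomial_eval_eq_re (p : ℂ[X]) :
    ∃ q : ℝ[X], q.natDegree ≤ p.natDegree ∧ ∀ t : ℝ, q.eval t = (p.eval (t : ℂ)).re := by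
  refine ⟨∑ i ∈ Finset.range (p.natDegree + 1), C (p.coeff i).re * X ^ i,
    natDegree_sum_le_of_forall_le _ _ fun i hi ↦ ?_, fun t ↦ ?_⟩
  · exact (natDegree_C_mul_X_pow_le _ _).trans (Nat.lt_succ_iff.1 (Finset.mem_range.1 hi))
  · rw [eval_eq_sum_range (p := p)]
    simp only [eval_finsetSum, eval_mul, eval_C, eval_pow, eval_X, Complex.re_sum,
      ← Complex.ofReal_pow, Complex.re_mul_ofReal]

theorem exists_real_polynomial_norm_sub_eval_le (p : ℂ[X]) :
    ∃ q : ℝ[X], q.natDegree ≤ p.natDegree ∧ ∀ (t : ℝ) (z : ℂ), z.im = 0 →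
      ‖z - ((q.eval t : ℝ) : ℂ)‖ ≤ ‖z - p.eval (t : ℂ)‖ := by
  obtain ⟨q, hdeg, heval⟩ := exists_real_polynomial_eval_eq_re p
  refine ⟨q, hdeg, fun t z hz ↦ ?_⟩
  have hre : z - ((q.eval t : ℝ) : ℂ) = ((z - p.eval (t : ℂ)).re : ℂ) :=
    Complex.ext (by simp [heval]) (by simp [hz])
  rw [hre, Complex.norm_real]
  exact Complex.abs_re_le_norm _

theorem stmt_0_general {ρ : ℝ} (hρ : 1 < ρ) {f : ℂ → ℂ} {M : ℝ}
    (hf : DifferentiableOn ℂ f (bernsteinEllipse ρ))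
    (hM : ∀ z ∈ bernsteinEllipse ρ, ‖f z‖ ≤ M) (n : ℕ) :
    ∃ p : ℂ[X], p.natDegree ≤ n ∧ ∀ t ∈ Icc (0 : ℝ) 4,
      ‖f t - p.eval (t : ℂ)‖ ≤ 2 * M / (ρ - 1) * (ρ ^ n)⁻¹ := by
  have hρ₀ : 0 < ρ⁻¹ := by positivity
  have hρ₁ : ρ⁻¹ < 1 := inv_lt_one_of_one_lt₀ hρ
  set F := f ∘ joukowsky
  have hmaps := mapsTo_joukowsky_annulus ρ
  have hF : DifferentiableOn ℂ F (annulus ρ⁻¹ ρ) := hf.comp (fun z hz ↦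
    (differentiableAt_joukowsky (ne_zero_of_mem_annulus hρ₀.le hz)).differentiableWithinAt) hmaps
  have hcoeff := norm_laurentCoeff_le_mul_inv_pow_natAbs hρ hF fun z hz ↦ hM _ (hmaps hz)
  have hsum := summable_of_norm_le_mul_pow_natAbs hρ₀.le hρ₁ hcoeff
  have hcont : ContinuousOn F (sphere 0 1) :=
    hF.continuousOn.mono (sphere_subset_annulus ⟨hρ₁, hρ⟩)
  refine ⟨chebyshevSum (laurentCoeff F) n, natDegree_chebyshevSum_le _ n, fun t ht ↦ ?_⟩
  obtain ⟨w, hw, hwt⟩ := exists_joukowsky_eq_of_mem_Icc ht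
  have hseries := hasSum_laurentCoeff_mul_chebyshev_T hcont hsum hw (congrArg f (joukowsky_inv w))
  have hterm (k : ℤ) : ‖laurentCoeff F k * (Chebyshev.T ℂ k).eval ((w + w⁻¹) / 2)‖ ≤
      M * ρ⁻¹ ^ k.natAbs := by
    rw [norm_mul]
    exact (mul_le_of_le_one_right (norm_nonneg _)
      (norm_chebyshev_T_eval_half_add_inv_le_one hw k)).trans (hcoeff k)
  have htail := norm_sub_sum_Icc_le_of_norm_le_mul_pow_natAbs hρ₁ hterm hseries n
  rw [← hwt, eval_chebyshevSum_joukowsky]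
  refine htail.trans_eq ?_
  have : ρ - 1 ≠ 0 := (sub_pos.2 hρ).ne'
  rw [inv_pow, pow_succ]
  field_simp

/-- **Bernstein's theorem.** If `f` is analytic and bounded by `M` on the Bernstein
ellipse `E_ρ` (`ρ > 1`) and real-valued on `[0,4]`, then for every `n` there is a real
polynomial `p` of degree at most `n` with `|f(t) - p(t)| ≤ (2M/(ρ-1))·ρ⁻ⁿ` on `[0,4]`. -/
theorem stmt_0 (ρ : ℝ) (hρ : 1 < ρ) (f : ℂ → ℂ) (M : ℝ)
    (hf : DifferentiableOn ℂ f (bernsteinEllipse ρ))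
    (hM : ∀ z ∈ bernsteinEllipse ρ, ‖f z‖ ≤ M)
    (hreal : ∀ t ∈ Set.Icc (0 : ℝ) 4, (f (t : ℂ)).im = 0) :
    ∀ n : ℕ, ∃ p : Polynomial ℝ, p.natDegree ≤ n ∧
      ∀ t ∈ Set.Icc (0 : ℝ) 4,
        ‖f (t : ℂ) - ((p.eval t : ℝ) : ℂ)‖ ≤ 2 * M / (ρ - 1) * (ρ ^ n)⁻¹ := by
  intro n
  obtain ⟨p, hp, hfp⟩ := stmt_0_general hρ hf hM n
  obtain ⟨q, hq, hqp⟩ := exists_real_polynomial_norm_sub_eval_le p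
  exact ⟨q, hq.trans hp, fun t ht ↦ (hqp t (f t) (hreal t ht)).trans (hfp t ht)⟩
end

section
/- Let V ⊆ ℝ^d, let n ∈ ℕ, and let K be a polynomial kernel of degree at most n on ℝ^d. Let M = HF_V(n). Then there exist maps φ, ψ : V → ℝ^M such that K(x,y) = ⟨φ(x), ψ(y)⟩ for all x, y ∈ V. -/
/-- The linear map sending a real polynomial in the variables `ι` to its restriction
(as a function) to a subset `V` of `ι → ℝ`. -/
noncomputable def restrictEval {ι : Type} (V : Set (ι → ℝ)) :
    MvPolynomial ι ℝ →ₗ[ℝ] (↥V → ℝ) where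
  toFun p := fun x => MvPolynomial.eval (x : ι → ℝ) p
  map_add' p q := by funext x; simp
  map_smul' c p := by funext x; simp [MvPolynomial.smul_eval]

/-- The space of functions `V → ℝ` that are restrictions to `V` of polynomials of
total degree at most `n`. -/
noncomputable def polySpace {ι : Type} (V : Set (ι → ℝ)) (n : ℕ) :
    Submodule ℝ (↥V → ℝ) :=
  (MvPolynomial.restrictTotalDegree ι ℝ n).map (restrictEval V)

/-- The Hilbert function of `V`: the dimension of the space of restrictions to `V`
of polynomials of total degree at most `n`. -/
noncomputable def HF {ι : Type} (V : Set (ι → ℝ)) (n : ℕ) : ℕ :=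
  Module.finrank ℝ ↥(polySpace V n)

/-- Multi-indices in `d` variables of total degree at most `n`. -/
abbrev MIdx (d n : ℕ) := {a : Fin d → Fin (n + 1) // ∑ i, (a i : ℕ) ≤ n}

/-- The polynomial kernel `K(x,y) = Σ_{|α|≤n, |β|≤n} c_{αβ} x^α y^β` of degree at most `n`
determined by the coefficient matrix `c`. -/
noncomputable def polyKer {d n : ℕ} (c : MIdx d n → MIdx d n → ℝ) (x y : Fin d → ℝ) : ℝ :=
  ∑ a : MIdx d n, ∑ b : MIdx d n,
    c a b * ((∏ i, x i ^ (a.1 i : ℕ)) * ∏ i, y i ^ (b.1 i : ℕ))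

/-! For fixed `y`, the section `K(·, y)` is a linear combination of monomials of degree at most `n`,
so its restriction to `V` lies in a space of dimension `HF V n`. Take for `φ(x)` the values at `x`
of a basis of that space, and for `ψ(y)` the coordinates of `K(·, y)` in this basis. -/

theorem exists_eq_sum_mul_of_forall_section_mem {R X Y : Type*} [CommRing R] [Nontrivial R]
    (W : Submodule R (X → R)) [Module.Free R W] [Module.Finite R W] {K : X → Y → R}
    (hK : ∀ y, (K · y) ∈ W) :
    ∃ (φ : X → Fin (Module.finrank R W) → R) (ψ : Y → Fin (Module.finrank R W) → R),
      ∀ x y, K x y = ∑ i, φ x i * ψ y i := by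
  let b := Module.finBasis R W
  refine ⟨fun x i => (b i : X → R) x, fun y => b.repr ⟨_, hK y⟩, fun x y => ?_⟩
  have expansion : (K · y) = ∑ i, b.repr ⟨_, hK y⟩ i • (b i : X → R) := by
    simpa only [Submodule.coe_sum, Submodule.coe_smul] using
      (congrArg Subtype.val (b.sum_repr ⟨_, hK y⟩)).symm
  calc K x y = (∑ i, b.repr ⟨_, hK y⟩ i • (b i : X → R)) x := congrFun expansion x
    _ = ∑ i, (b i : X → R) x * b.repr ⟨_, hK y⟩ i := by
      simp only [Finset.sum_apply, Pi.smul_apply, smul_eq_mul, mul_comm]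

instance finite_polySpace {ι : Type} [Finite ι] (V : Set (ι → ℝ)) (n : ℕ) :
    Module.Finite ℝ (polySpace V n) :=
  inferInstanceAs (Module.Finite ℝ ((MvPolynomial.restrictTotalDegree ι ℝ n).map (restrictEval V)))

theorem prod_pow_mem_polySpace {ι : Type} [Fintype ι] (V : Set (ι → ℝ)) {n : ℕ} {a : ι → ℕ}
    (ha : ∑ i, a i ≤ n) : (fun x : V => ∏ i, x.1 i ^ a i) ∈ polySpace V n := by
  refine ⟨∏ i, MvPolynomial.X i ^ a i, (MvPolynomial.mem_restrictTotalDegree _ _ _).mpr ?_, ?_⟩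
  · calc (∏ i, MvPolynomial.X (R := ℝ) i ^ a i).totalDegree
        ≤ ∑ i, (MvPolynomial.X (R := ℝ) i ^ a i).totalDegree :=
          MvPolynomial.totalDegree_finsetProd _ _
      _ = ∑ i, a i := by simp only [MvPolynomial.totalDegree_X_pow]
      _ ≤ n := ha
  · ext x
    simp [restrictEval]

section PolyKer

variable {d n : ℕ} (c : MIdx d n → MIdx d n → ℝ)

theorem polyKer_eq_sum_mul_prod_pow (x y : Fin d → ℝ) :
    polyKer c x y =
      ∑ a, (∑ b, c a b * ∏ i, y i ^ (b.1 i : ℕ)) * ∏ i, x i ^ (a.1 i : ℕ) := by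
  simp only [polyKer, Finset.sum_mul]
  exact Finset.sum_congr rfl fun a _ => Finset.sum_congr rfl fun b _ => by ring

theorem polyKer_section_mem_polySpace (V : Set (Fin d → ℝ)) (y : Fin d → ℝ) :
    (fun x : V => polyKer c x y) ∈ polySpace V n := by
  have combination : (fun x : V => polyKer c x y) =
      ∑ a : MIdx d n, (∑ b, c a b * ∏ i, y i ^ (b.1 i : ℕ)) •
        fun x : V => ∏ i, x.1 i ^ (a.1 i : ℕ) := by
    ext x
    simp only [polyKer_eq_sum_mul_prod_pow, Finset.sum_apply, Pi.smul_apply, smul_eq_mul]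
  rw [combination]
  exact sum_mem fun a _ => Submodule.smul_mem _ _ (prod_pow_mem_polySpace V a.2)

end PolyKer

theorem stmt_3_general (d n : ℕ) (V : Set (Fin d → ℝ)) (c : MIdx d n → MIdx d n → ℝ) :
    ∃ (φ : ↥V → Fin (HF V n) → ℝ) (ψ : (Fin d → ℝ) → Fin (HF V n) → ℝ),
      ∀ (x : ↥V) (y : Fin d → ℝ), polyKer c x.1 y = ∑ i, φ x i * ψ y i :=
  exists_eq_sum_mul_of_forall_section_mem (polySpace V n) (polyKer_section_mem_polySpace c V)

/-- **Rank bound for polynomial kernels over a set.** A polynomial kernel of degree at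
most `n` on `ℝ^d`, restricted to `V × V`, admits a factorization of rank `HF_V(n)`. -/
theorem stmt_3 (d n : ℕ) (V : Set (Fin d → ℝ)) (c : MIdx d n → MIdx d n → ℝ)
    (hsym : ∀ a b, c a b = c b a) :
    ∃ φ ψ : ↥V → Fin (HF V n) → ℝ,
      ∀ x y : ↥V, polyKer c x.1 y.1 = ∑ i, φ x i * ψ y i :=
  let ⟨φ, ψ, h⟩ := stmt_3_general d n V c
  ⟨φ, fun y => ψ y.1, fun x y => h x y.1⟩
end

section
/- Let V ⊆ ℝ^d, let n ∈ ℕ, and let K(x,y) = Σ_{|α| ≤ n, |β| ≤ n} c_{αβ} x^α y^β be a polynomial kernel of degree at most n whose symmetric coefficient matrix C = (c_{αβ}) (indexed by multi-indices of total degree at most n) is positive definite. Then the rank of K restricted to V × V equals HF_V(n): there exist φ, ψ : V → ℝ^{HF_V(n)} with K(x,y) = ⟨φ(x), ψ(y)⟩ on V × V, and no such factorization exists with fewer than HF_V(n) coordinates. -/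
/-!
Evaluating the monomials of degree at most `n` at the points of `V` gives a matrix `M` of rank
`HF V n`, and the kernel is `M * C * Mᵀ`. Choose `HF V n` points of `V` whose rows form a basis `N`
of the row space, so that `M = L * N`. Then `L * (N * C * Mᵀ)` is a factorization through
`HF V n` coordinates. Conversely, at the chosen points the kernel has Gram matrix `N * C * Nᵀ`.
Its quadratic form takes the value of that of `C` at `Nᵀ w ≠ 0` for each `w ≠ 0`, because the rows
of `N` are independent; hence the Gram matrix is invertible, and no factorization can have fewer
coordinates.
-/

open Matrix

section AnisotropicMatrices

variable {m n κ K : Type*} [Field K] [Fintype n] [Fintype κ]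

lemma exists_linearIndependent_row_submatrix_and_mul_eq {A : Matrix m n K} {r : ℕ}
    (hA : A.rank = r) :
    ∃ (s : Fin r → m) (L : Matrix m (Fin r) K),
      LinearIndependent K (A.submatrix s id).row ∧ L * A.submatrix s id = A := by
  obtain ⟨ι, t, -, hspan, hli⟩ := exists_linearIndependent' K A.row
  have : Fintype ι := @Fintype.ofFinite _ hli.finite
  have hrow (i : m) : ∃ l : ι → K, l ᵥ* A.submatrix t id = A.row i := by
    have hi : A.row i ∈ Submodule.span K (Set.range (A.submatrix t id).row) :=
      hspan.symm ▸ Submodule.subset_span ⟨i, rfl⟩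
    rwa [← range_vecMulLinear] at hi
  choose l hl using hrow
  have hmul : of l * A.submatrix t id = A := funext hl
  have hrank : A.rank ≤ (A.submatrix t id).rank := by
    conv_lhs => rw [← hmul]
    exact rank_mul_le_right _ _
  have hcard : Fintype.card ι = r := by
    rw [← hli.rank_matrix (M := A.submatrix t id), ← hA]
    exact (rank_submatrix_le A t id).antisymm hrank
  let e : Fin r ≃ ι := (Fintype.equivFinOfCardEq hcard).symm
  refine ⟨t ∘ e, (of l).submatrix id e, hli.comp e e.injective, ?_⟩
  exact (submatrix_mul_equiv (of l) (A.submatrix t id) id e id).trans hmul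

lemma isUnit_of_dotProduct_mulVec_ne_zero [DecidableEq n] {A : Matrix n n K}
    (hA : ∀ v, v ≠ 0 → v ⬝ᵥ A *ᵥ v ≠ 0) : IsUnit A := by
  rw [← mulVec_injective_iff_isUnit]
  refine (injective_iff_map_eq_zero A.mulVecLin).2 fun v hv => ?_
  by_contra hne
  exact hA v hne (by rw [← mulVecLin_apply, hv, dotProduct_zero])

lemma dotProduct_mul_mul_transpose_mulVec_ne_zero {R : Type*} [CommRing R] {C : Matrix n n R}
    (hC : ∀ v, v ≠ 0 → v ⬝ᵥ C *ᵥ v ≠ 0) {N : Matrix κ n R} (hN : LinearIndependent R N.row)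
    {w : κ → R} (hw : w ≠ 0) : w ⬝ᵥ (N * C * Nᵀ) *ᵥ w ≠ 0 := by
  have hwN : w ᵥ* N ≠ 0 := fun h => hw (vecMul_injective_iff.2 hN (h.trans (zero_vecMul N).symm))
  rw [← mulVec_mulVec, ← mulVec_mulVec, dotProduct_mulVec, mulVec_transpose]
  exact hC _ hwN

lemma rank_le_card_of_mul_mul_transpose_eq_mul {C : Matrix n n K}
    (hC : ∀ v, v ≠ 0 → v ⬝ᵥ C *ᵥ v ≠ 0) {M : Matrix m n K} {Φ : Matrix m κ K} {Ψ : Matrix κ m K}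
    (h : M * C * Mᵀ = Φ * Ψ) : M.rank ≤ Fintype.card κ := by
  obtain ⟨s, -, hN, -⟩ := exists_linearIndependent_row_submatrix_and_mul_eq (A := M) rfl
  set N := M.submatrix s id
  have hunit : IsUnit (N * C * Nᵀ) :=
    isUnit_of_dotProduct_mulVec_ne_zero fun _ => dotProduct_mul_mul_transpose_mulVec_ne_zero hC hN
  have hfactor : N * C * Nᵀ = Φ.submatrix s id * Ψ.submatrix id s :=
    congrArg (fun G => G.submatrix s s) h
  calc M.rank = (N * C * Nᵀ).rank := by rw [rank_of_isUnit _ hunit, Fintype.card_fin]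
    _ ≤ (Φ.submatrix s id).rank := hfactor ▸ rank_mul_le_left _ _
    _ ≤ Fintype.card κ := rank_le_card_width _

end AnisotropicMatrices

section Monomials

lemma restrictEval_monomial_one {ι : Type} [Fintype ι] (V : Set (ι → ℝ)) (s : ι →₀ ℕ) :
    restrictEval V (MvPolynomial.monomial s 1) = fun x => ∏ i, x.1 i ^ s i := by
  funext x
  simp [restrictEval, MvPolynomial.eval_monomial, Finsupp.prod_fintype]

variable {d : ℕ} (V : Set (Fin d → ℝ))

/-- The multivariate Vandermonde matrix of `V`: its rows are the points of `V`, its columns the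
monomials of total degree at most `n`, and its entries the values `x ^ α`. -/
def monomialMatrix (n : ℕ) : Matrix V (MIdx d n) ℝ :=
  of fun x a => ∏ i, x.1 i ^ (a.1 i : ℕ)

lemma polyKer_eq_mul_mul_transpose {n : ℕ} (c : MIdx d n → MIdx d n → ℝ) (x y : V) :
    polyKer c x.1 y.1 = (monomialMatrix V n * of c * (monomialMatrix V n)ᵀ) x y := by
  simp only [polyKer, monomialMatrix, mul_apply, transpose_apply, of_apply, Finset.sum_mul]
  rw [Finset.sum_comm]
  exact Finset.sum_congr rfl fun _ _ => Finset.sum_congr rfl fun _ _ => by ring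

lemma polySpace_eq_span_range_col (n : ℕ) :
    polySpace V n = Submodule.span ℝ (Set.range (monomialMatrix V n).col) := by
  rw [polySpace, MvPolynomial.restrictTotalDegree, MvPolynomial.restrictSupport_eq_span,
    Submodule.map_span, Set.image_image]
  simp only [restrictEval_monomial_one]
  congr 1
  apply Set.Subset.antisymm
  · rintro _ ⟨s, hs, rfl⟩
    rw [Set.mem_ofPred_eq, Finsupp.sum_fintype _ _ fun _ => rfl] at hs
    have hle (i : Fin d) : s i ≤ n :=
      (Finset.single_le_sum (fun _ _ => Nat.zero_le _) (Finset.mem_univ i)).trans hs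
    exact ⟨⟨fun i => ⟨s i, Nat.lt_succ_of_le (hle i)⟩, hs⟩, rfl⟩
  · rintro _ ⟨a, rfl⟩
    refine ⟨Finsupp.equivFunOnFinite.symm fun i => (a.1 i : ℕ), ?_, rfl⟩
    rw [Set.mem_ofPred_eq, Finsupp.sum_fintype _ _ fun _ => rfl]
    exact a.2

lemma rank_monomialMatrix (n : ℕ) : (monomialMatrix V n).rank = HF V n := by
  rw [rank_eq_finrank_span_cols, ← polySpace_eq_span_range_col, HF]

end Monomials

theorem stmt_6_general (d n : ℕ) (V : Set (Fin d → ℝ)) (c : MIdx d n → MIdx d n → ℝ)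
    (hc : ∀ v : MIdx d n → ℝ, v ≠ 0 → ∑ a, ∑ b, v a * c a b * v b ≠ 0) :
    (∃ φ ψ : ↥V → Fin (HF V n) → ℝ,
      ∀ x y : ↥V, polyKer c x.1 y.1 = ∑ i, φ x i * ψ y i) ∧
    ∀ r : ℕ, r < HF V n →
      ¬ ∃ φ ψ : ↥V → Fin r → ℝ,
          ∀ x y : ↥V, polyKer c x.1 y.1 = ∑ i, φ x i * ψ y i := by
  simp only [polyKer_eq_mul_mul_transpose]
  set M := monomialMatrix V n
  have hM : M.rank = HF V n := rank_monomialMatrix V n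
  constructor
  · obtain ⟨s, L, -, hL⟩ := exists_linearIndependent_row_submatrix_and_mul_eq hM
    refine ⟨L, (M.submatrix s id * of c * Mᵀ)ᵀ, fun x y => ?_⟩
    calc (M * of c * Mᵀ) x y = (L * (M.submatrix s id * of c * Mᵀ)) x y := by
          rw [← Matrix.mul_assoc, ← Matrix.mul_assoc, hL]
      _ = _ := mul_apply
  · rintro r hr ⟨φ, ψ, h⟩
    have hC (v : MIdx d n → ℝ) (hv : v ≠ 0) : v ⬝ᵥ of c *ᵥ v ≠ 0 := by
      simpa only [dotProduct, mulVec, of_apply, Finset.mul_sum, mul_assoc] using hc v hv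
    have hfactor : M * of c * Mᵀ = of φ * (of ψ)ᵀ := Matrix.ext h
    have hle := rank_le_card_of_mul_mul_transpose_eq_mul hC hfactor
    rw [hM, Fintype.card_fin] at hle
    exact hle.not_gt hr

/-- **Rank of a polynomial kernel with positive definite coefficient matrix.** If the
symmetric coefficient matrix of the polynomial kernel `K` of degree at most `n` is
positive definite, then the rank of `K` restricted to `V × V` equals `HF_V(n)`:
a factorization with `HF_V(n)` coordinates exists, and none with fewer. -/
theorem stmt_6 (d n : ℕ) (V : Set (Fin d → ℝ)) (c : MIdx d n → MIdx d n → ℝ)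
    (hsym : ∀ a b, c a b = c b a)
    (hpd : ∀ v : MIdx d n → ℝ, v ≠ 0 → 0 < ∑ a, ∑ b, v a * c a b * v b) :
    (∃ φ ψ : ↥V → Fin (HF V n) → ℝ,
      ∀ x y : ↥V, polyKer c x.1 y.1 = ∑ i, φ x i * ψ y i) ∧
    ∀ r : ℕ, r < HF V n →
      ¬ ∃ φ ψ : ↥V → Fin r → ℝ,
          ∀ x y : ↥V, polyKer c x.1 y.1 = ∑ i, φ x i * ψ y i :=
  stmt_6_general d n V c fun v hv => (hpd v hv).ne'
end

section
/- Let V ⊆ ℝ^d and n ∈ ℕ, and define the Taylor features kernel R_n(x,y) = Σ_{k=0}^{n} ⟨x,y⟩^k / k!. Then the rank of R_n restricted to V × V equals HF_V(n). -/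
/-- The rank of the kernel `K` restricted to `V × V`: the least `r` such that there are
feature maps `φ, ψ : V → ℝ^r` with `K(x,y) = ⟨φ(x), ψ(y)⟩` on `V × V`. -/
noncomputable def rankOn {X : Type*} (V : Set X) (K : X → X → ℝ) : ℕ :=
  sInf {r : ℕ | ∃ φ ψ : ↥V → Fin r → ℝ, ∀ x y : ↥V, K x.1 y.1 = ∑ i, φ x i * ψ y i}

/-- The Taylor features kernel `R_n(x,y) = Σ_{k=0}^{n} ⟨x,y⟩^k / k!` on `ℝ^d`. -/
noncomputable def taylorKer (d n : ℕ) (x y : Fin d → ℝ) : ℝ :=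
  ∑ k ∈ Finset.range (n + 1), (∑ i, x i * y i) ^ k / (Nat.factorial k : ℝ)

/-! The rank of a kernel is the dimension of the span of its sections `K(·, y)`. For a Gram kernel
`K(x, y) = ⟨φ x, φ y⟩` these sections span every function `⟨φ ·, w⟩`, since the component of `w`
orthogonal to the range of `φ` contributes nothing. By the multinomial theorem a polynomial in
`⟨x, y⟩` of degree `n` with positive coefficients is a Gram kernel whose features are positive
multiples of the monomials of degree at most `n`, so its sections span exactly the polynomial
functions of degree at most `n`. -/

open Finset Module Submodule
open scoped Matrix

section SectionSpan

variable {R 𝕜 X Y : Type*} [CommSemiring R] [Field 𝕜]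

/-- The span of the sections `K(·, y)` of a kernel `K`: the analogue of the column space of a
matrix, for a kernel on possibly infinite sets. -/
def sectionSpan (K : X → Y → R) : Submodule R (X → R) :=
  span R (Set.range fun y x ↦ K x y)

theorem exists_eq_sum_mul_iff_sectionSpan_le {ι : Type*} [Fintype ι] {K : X → Y → R}
    {φ : X → ι → R} :
    (∃ ψ : Y → ι → R, ∀ x y, K x y = ∑ i, φ x i * ψ y i) ↔
      sectionSpan K ≤ span R (Set.range fun i x ↦ φ x i) := by
  simp only [sectionSpan, span_le, Set.range_subset_iff, SetLike.mem_coe,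
    mem_span_range_iff_exists_fun, Classical.skolem, funext_iff, Finset.sum_apply, Pi.smul_apply,
    smul_eq_mul, mul_comm (φ _ _)]
  exact exists_congr fun ψ ↦ ⟨fun h y x ↦ (h x y).symm, fun h x y ↦ (h y x).symm⟩

theorem isLeast_finrank_sectionSpan (K : X → Y → 𝕜) [FiniteDimensional 𝕜 (sectionSpan K)] :
    IsLeast {r : ℕ | ∃ (φ : X → Fin r → 𝕜) (ψ : Y → Fin r → 𝕜), ∀ x y, K x y = ∑ i, φ x i * ψ y i}
      (finrank 𝕜 (sectionSpan K)) := by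
  simp only [exists_eq_sum_mul_iff_sectionSpan_le]
  constructor
  · let b := finBasis 𝕜 (sectionSpan K)
    have span_b : span 𝕜 (Set.range fun i ↦ (b i : X → 𝕜)) = sectionSpan K := by
      have := congrArg (map (sectionSpan K).subtype) b.span_eq
      rwa [map_span, ← Set.range_comp, map_subtype_top] at this
    exact ⟨fun x i ↦ (b i : X → 𝕜) x, span_b.ge⟩
  · rintro r ⟨φ, hφ⟩
    have : FiniteDimensional 𝕜 (span 𝕜 (Set.range fun i x ↦ φ x i)) :=
      .span_of_finite 𝕜 (Set.finite_range _)
    calc finrank 𝕜 (sectionSpan K)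
      _ ≤ finrank 𝕜 (span 𝕜 (Set.range fun i x ↦ φ x i)) := finrank_mono hφ
      _ ≤ Fintype.card (Fin r) := finrank_range_le_card _
      _ = r := Fintype.card_fin r

end SectionSpan

theorem rankOn_eq_finrank_sectionSpan {X : Type*} (V : Set X) (K : X → X → ℝ)
    [FiniteDimensional ℝ (sectionSpan fun x y : V ↦ K x y)] :
    rankOn V K = finrank ℝ (sectionSpan fun x y : V ↦ K x y) :=
  (isLeast_finrank_sectionSpan _).csInf_eq

section Gram

variable {𝕜 E X : Type*} [RCLike 𝕜] [NormedAddCommGroup E] [InnerProductSpace 𝕜 E]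

/-- The linear map sending `w` to the function `x ↦ ⟪φ x, w⟫`; its range consists of the functions
that depend linearly on the features `φ`. -/
def featureEval (φ : X → E) : E →ₗ[𝕜] X → 𝕜 :=
  LinearMap.pi fun x ↦ innerₛₗ 𝕜 (φ x)

@[simp]
theorem featureEval_apply (φ : X → E) (w : E) (x : X) :
    featureEval (𝕜 := 𝕜) φ w x = inner 𝕜 (φ x) w :=
  rfl

theorem ker_featureEval (φ : X → E) :
    (featureEval (𝕜 := 𝕜) φ).ker = (span 𝕜 (Set.range φ))ᗮ := by
  ext w
  simp only [LinearMap.mem_ker, funext_iff, featureEval_apply, Pi.zero_apply, span_range_eq_iSup,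
    ← iInf_orthogonal, mem_iInf, mem_orthogonal_singleton_iff_inner_right]

theorem sectionSpan_inner_eq_range_featureEval (φ : X → E)
    [(span 𝕜 (Set.range φ)).HasOrthogonalProjection] :
    sectionSpan (fun x y ↦ inner 𝕜 (φ x) (φ y)) = (featureEval (𝕜 := 𝕜) φ).range := by
  set U := span 𝕜 (Set.range φ) with hU
  calc sectionSpan (fun x y ↦ inner 𝕜 (φ x) (φ y))
    _ = U.map (featureEval φ) := by rw [hU, map_span, ← Set.range_comp]; rfl
    _ = (U ⊔ Uᗮ).map (featureEval φ) := by
      rw [Submodule.map_sup, ← ker_featureEval, LinearMap.le_ker_iff_map.1 le_rfl, sup_bot_eq]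
    _ = (featureEval φ).range := by
      rw [sup_orthogonal_of_hasOrthogonalProjection, Submodule.map_top]

end Gram

theorem span_range_smul_of_ne_zero {𝕜 M ι : Type*} [DivisionRing 𝕜] [AddCommGroup M] [Module 𝕜 M]
    {a : ι → 𝕜} (ha : ∀ i, a i ≠ 0) (v : ι → M) :
    span 𝕜 (Set.range fun i ↦ a i • v i) = span 𝕜 (Set.range v) := by
  simp only [span_range_eq_iSup, span_singleton_smul_eq (ha _).isUnit]

theorem range_featureEval_toLp {X ι : Type*} [Fintype ι] (f : ι → X → ℝ) :
    (featureEval (𝕜 := ℝ) fun x ↦ WithLp.toLp 2 fun i ↦ f i x).range = span ℝ (Set.range f) := by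
  classical
  rw [← Submodule.map_top, ← (EuclideanSpace.basisFun ι ℝ).toBasis.span_eq, map_span,
    ← Set.range_comp]
  congr 2
  ext i x
  simp [EuclideanSpace.inner_single_right]

theorem sectionSpan_sum_mul_eq_span {X ι : Type*} {s : Finset ι} {c : ι → ℝ}
    (hc : ∀ i ∈ s, 0 < c i) (f : ι → X → ℝ) :
    sectionSpan (fun x y ↦ ∑ i ∈ s, c i * (f i x * f i y)) = span ℝ (f '' s) := by
  let φ (x : X) : EuclideanSpace ℝ s := WithLp.toLp 2 fun i ↦ √(c i) * f i x
  have gram (x y : X) : ∑ i ∈ s, c i * (f i x * f i y) = inner ℝ (φ x) (φ y) := by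
    rw [← sum_coe_sort, PiLp.inner_apply]
    refine Fintype.sum_congr _ _ fun i ↦ ?_
    have := Real.mul_self_sqrt (hc i i.2).le
    simp only [φ, RCLike.inner_apply, conj_trivial]
    linear_combination -(f i x * f i y) * this
  calc sectionSpan (fun x y ↦ ∑ i ∈ s, c i * (f i x * f i y))
    _ = (featureEval (𝕜 := ℝ) φ).range := by
      simp only [gram, sectionSpan_inner_eq_range_featureEval]
    _ = span ℝ (Set.range fun i : s ↦ √(c i) • f i) := range_featureEval_toLp _
    _ = span ℝ (f '' s) := by
      rw [span_range_smul_of_ne_zero fun i : s ↦ (Real.sqrt_pos.2 (hc i i.2)).ne',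
        Set.image_eq_range]
      rfl

instance finiteDimensional_polySpace {ι : Type} [Finite ι] (V : Set (ι → ℝ)) (n : ℕ) :
    FiniteDimensional ℝ (polySpace V n) := by
  unfold polySpace
  infer_instance

section Monomials

variable {ι : Type} [Fintype ι]

theorem polySpace_eq_span_monomials (V : Set (ι → ℝ)) (n : ℕ) :
    polySpace V n =
      span ℝ ((fun (α : ι → ℕ) (x : V) ↦ ∏ i, x.1 i ^ α i) '' {α | ∑ i, α i ≤ n}) := by
  rw [polySpace, MvPolynomial.restrictTotalDegree, MvPolynomial.restrictSupport_eq_span, map_span,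
    Set.image_image, ← Finsupp.equivFunOnFinite.image_preimage {α | ∑ i, α i ≤ n}, Set.image_image]
  congr! 3 with m
  · ext x
    simp [restrictEval, MvPolynomial.eval_monomial, Finsupp.prod_fintype]
  · simp [Finsupp.sum_fintype]

theorem sum_mul_dotProduct_pow [DecidableEq ι] {R : Type*} [CommSemiring R] (c : ℕ → R) (n : ℕ)
    (x y : ι → R) :
    ∑ k ∈ range (n + 1), c k * (x ⬝ᵥ y) ^ k =
      ∑ α ∈ (range (n + 1)).biUnion (piAntidiag univ),
        c (∑ i, α i) * Nat.multinomial univ α * ((∏ i, x i ^ α i) * ∏ i, y i ^ α i) := by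
  have disjoint : ((range (n + 1) : Finset ℕ) : Set ℕ).PairwiseDisjoint
      (piAntidiag (univ : Finset ι)) := fun k _ l _ hkl ↦ Finset.disjoint_left.2 fun α hk hl ↦
    hkl ((mem_piAntidiag.1 hk).1.symm.trans (mem_piAntidiag.1 hl).1)
  rw [sum_biUnion disjoint]
  refine sum_congr rfl fun k _ ↦ ?_
  rw [dotProduct, sum_pow_eq_sum_piAntidiag, mul_sum]
  refine sum_congr rfl fun α hα ↦ ?_
  rw [(mem_piAntidiag.1 hα).1, ← prod_mul_distrib, mul_assoc]
  simp only [mul_pow]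

theorem sectionSpan_sum_mul_dotProduct_pow {n : ℕ} {c : ℕ → ℝ} (hc : ∀ k ≤ n, 0 < c k)
    (V : Set (ι → ℝ)) :
    sectionSpan (fun x y : V ↦ ∑ k ∈ range (n + 1), c k * (x.1 ⬝ᵥ y.1) ^ k) = polySpace V n := by
  classical
  let s : Finset (ι → ℕ) := (range (n + 1)).biUnion (piAntidiag univ)
  have mem_s {α} : α ∈ s ↔ ∑ i, α i ≤ n := by simp [s]
  have weight_pos (α) (hα : α ∈ s) : 0 < c (∑ i, α i) * Nat.multinomial univ α :=
    mul_pos (hc _ (mem_s.1 hα)) (mod_cast Nat.multinomial_pos univ α)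
  simp only [sum_mul_dotProduct_pow]
  rw [sectionSpan_sum_mul_eq_span weight_pos fun α (x : V) ↦ ∏ i, x.1 i ^ α i,
    polySpace_eq_span_monomials]
  congr! 2
  exact Set.ext fun α ↦ mem_s

end Monomials

theorem taylorKer_eq_sum_dotProduct_pow (d n : ℕ) :
    taylorKer d n = fun x y ↦ ∑ k ∈ range (n + 1), (k.factorial : ℝ)⁻¹ * (x ⬝ᵥ y) ^ k := by
  ext x y
  simp only [taylorKer, dotProduct, div_eq_inv_mul]

theorem stmt_8_general {ι : Type} [Fintype ι] (n : ℕ) (V : Set (ι → ℝ)) {c : ℕ → ℝ}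
    (hc : ∀ k ≤ n, 0 < c k) :
    rankOn V (fun x y ↦ ∑ k ∈ range (n + 1), c k * (x ⬝ᵥ y) ^ k) = HF V n := by
  have sections := sectionSpan_sum_mul_dotProduct_pow hc V
  have : FiniteDimensional ℝ (sectionSpan _) := sections ▸ finiteDimensional_polySpace V n
  rw [rankOn_eq_finrank_sectionSpan, sections, HF]

/-- **Rank of the Taylor features kernel over a set.** The rank of
`R_n(x,y) = Σ_{k=0}^{n} ⟨x,y⟩^k / k!` restricted to `V × V` equals `HF_V(n)`. -/
theorem stmt_8 (d n : ℕ) (V : Set (Fin d → ℝ)) :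
    rankOn V (taylorKer d n) = HF V n := by
  exact taylorKer_eq_sum_dotProduct_pow d n ▸ stmt_8_general n V fun k _ ↦ by positivity
end

section
/- There is a universal constant C > 0 such that the following holds. Let V ⊆ ℝ^d and k ≥ 1 be such that HF_V(m) ≤ (15m)^k for all integers m ≥ 1, and let 𝒳 be a nonempty compact subset of V. Then for every integer n ≥ 1 there exists a finite subset S ⊆ 𝒳 with log |S| ≤ C·k·log((n+1)·(k+1)) such that sup_{x ∈ 𝒳} |p(x)| ≤ 2·sup_{x ∈ S} |p(x)| for every real polynomial p in d variables of total degree at most n. -/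
/-!
For `W` a finite-dimensional space of continuous functions on a compact space, points `sᵢ`
maximizing `|det (bⱼ (sᵢ))|` for a basis `b` of `W` have Lagrange functions bounded by `1`, so
`|f| ≤ ∑ i, |f (sᵢ)|` on `W`: the points norm `W` with slack `dim W`. To bring the slack down to a
constant, apply this to the powers `p ^ r` with `deg p ≤ n`: taking `r`-th roots, the slack
becomes `HF (r * n) ^ (1 / r)`, which is at most `2` once `r` is quadratic in `(n + 1) * (k + 1)`,
since the Hilbert function grows only polynomially.
-/

open Module

section FeketePoints

variable {𝕜 ι E α : Type*}

theorem exists_basis_mem_of_span_eq_top [Field 𝕜] [AddCommGroup E] [Module 𝕜 E]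
    (b : Basis ι 𝕜 E) {K : Set E} (hK : Submodule.span 𝕜 K = ⊤) :
    ∃ e : Basis ι 𝕜 E, ∀ i, e i ∈ K := by
  let e := Basis.ofSpan hK.ge
  refine ⟨e.reindex (e.indexEquiv b), fun i => Basis.ofSpan_subset hK.ge ?_⟩
  rw [Basis.reindex_apply]
  exact Set.mem_range_self _

theorem det_update_eq_repr_mul_det {R : Type*} [CommRing R] [AddCommGroup E] [Module R E]
    [Fintype ι] [DecidableEq ι] (b e : Basis ι R E) (i : ι) (w : E) :
    b.det (Function.update e i w) = e.repr w i * b.det e := by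
  have h := LinearMap.congr_fun
    (b.det_smul_mk_coord_eq_det_update e.linearIndependent e.span_eq.ge i) w
  have hmk : Basis.mk e.linearIndependent e.span_eq.ge = e := Basis.eq_of_apply_eq (by simp)
  rw [hmk] at h
  rw [mul_comm]
  exact h.symm

variable [NontriviallyNormedField 𝕜] [CompleteSpace 𝕜]

section Basis

variable [AddCommGroup E] [Module 𝕜 E] [TopologicalSpace E] [IsTopologicalAddGroup E]
  [ContinuousSMul 𝕜 E] [T2Space E]

theorem continuous_basis_det [Fintype ι] [DecidableEq ι] (b : Basis ι 𝕜 E) :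
    Continuous fun v : ι → E => b.det v := by
  have := b.finiteDimensional_of_finite
  simp only [Basis.det_apply]
  refine Continuous.matrix_det (continuous_matrix fun i j => ?_)
  exact (b.coord i).continuous_of_finiteDimensional.comp (continuous_apply j)

theorem exists_basis_mem_norm_repr_le_one [Finite ι] (b : Basis ι 𝕜 E) {K : Set E}
    (hK : IsCompact K) (hspan : Submodule.span 𝕜 K = ⊤) :
    ∃ e : Basis ι 𝕜 E, (∀ i, e i ∈ K) ∧ ∀ w ∈ K, ∀ i, ‖e.repr w i‖ ≤ 1 := by
  classical
  have := Fintype.ofFinite ι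
  obtain ⟨e₀, he₀⟩ := exists_basis_mem_of_span_eq_top b hspan
  obtain ⟨v, hvK, hmax⟩ := (isCompact_univ_pi fun _ => hK).exists_isMaxOn
    ⟨e₀, fun i _ => he₀ i⟩ (continuous_basis_det b).norm.continuousOn
  have hdet_pos : 0 < ‖b.det v‖ :=
    (norm_pos_iff.2 (b.isUnit_det e₀).ne_zero).trans_le (hmax fun i _ => he₀ i)
  obtain ⟨hli, hsp⟩ := b.is_basis_iff_det.2 (norm_pos_iff.1 hdet_pos).isUnit
  let e := Basis.mk hli hsp.ge
  have hev : ⇑e = v := Basis.coe_mk hli hsp.ge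
  refine ⟨e, fun i => hev ▸ hvK i trivial, fun w hw i => ?_⟩
  have hupdate : Function.update v i w ∈ Set.univ.pi fun _ => K :=
    (Set.update_mem_pi_iff_of_mem hvK).2 fun _ => hw
  have hle : ‖e.repr w i‖ * ‖b.det v‖ ≤ ‖b.det v‖ := by
    rw [← norm_mul, ← hev, ← det_update_eq_repr_mul_det, hev]
    exact hmax hupdate
  exact (mul_le_iff_le_one_left hdet_pos).1 hle

end Basis

variable [TopologicalSpace α] [CompactSpace α]

theorem exists_interpolation_norm_le_one [Fintype ι] {f : ι → α → 𝕜}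
    (hf : LinearIndependent 𝕜 f) (hcont : ∀ i, Continuous (f i)) :
    ∃ s : ι → α, ∀ x, ∃ c : ι → 𝕜, (∀ i, ‖c i‖ ≤ 1) ∧
      ∀ g ∈ Submodule.span 𝕜 (Set.range f), g x = ∑ i, c i * g (s i) := by
  obtain ⟨e, he, hle⟩ := exists_basis_mem_norm_repr_le_one (Pi.basisFun 𝕜 ι)
    (isCompact_range (continuous_pi hcont)) (span_flip_eq_top_iff_linearIndependent.2 hf)
  choose s hs using he
  refine ⟨s, fun x => ⟨e.repr (flip f x), hle _ ⟨x, rfl⟩, fun g hg => ?_⟩⟩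
  have hbasis : Set.EqOn (LinearMap.proj x : (α → 𝕜) →ₗ[𝕜] 𝕜)
      (∑ i, e.repr (flip f x) i • LinearMap.proj (s i) : (α → 𝕜) →ₗ[𝕜] 𝕜) (Set.range f) := by
    rintro _ ⟨j, rfl⟩
    simpa [← hs, flip] using (congrFun (e.sum_repr (flip f x)) j).symm
  simpa using LinearMap.eqOn_span hbasis hg

theorem exists_fekete_points (W : Submodule 𝕜 (α → 𝕜)) [FiniteDimensional 𝕜 W]
    (hW : ∀ f ∈ W, Continuous f) :
    ∃ s : Fin (finrank 𝕜 W) → α, ∀ f ∈ W, ∀ x, ‖f x‖ ≤ ∑ i, ‖f (s i)‖ := by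
  let b := finBasis 𝕜 W
  have hspan : Submodule.span 𝕜 (Set.range (W.subtype ∘ b)) = W := by
    rw [Set.range_comp, Submodule.span_image, b.span_eq, Submodule.map_subtype_top]
  obtain ⟨s, hs⟩ := exists_interpolation_norm_le_one
    (b.linearIndependent.map' W.subtype W.ker_subtype) fun i => hW _ (b i).2
  refine ⟨s, fun f hf x => ?_⟩
  obtain ⟨c, hc, hinterp⟩ := hs x
  rw [hinterp f (hspan.symm ▸ hf)]
  refine norm_sum_le_of_le _ fun i _ => ?_
  rw [norm_mul]
  exact mul_le_of_le_one_left (norm_nonneg _) (hc i)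

end FeketePoints

section HilbertFunction

variable {ι : Type} {X V : Set (ι → ℝ)} {n : ℕ}

theorem restrictEval_mem_polySpace {p : MvPolynomial ι ℝ} (hp : p.totalDegree ≤ n) :
    restrictEval V p ∈ polySpace V n :=
  Submodule.mem_map_of_mem ((MvPolynomial.mem_restrictTotalDegree ι n p).2 hp)

theorem continuous_of_mem_polySpace {f : V → ℝ} (hf : f ∈ polySpace V n) : Continuous f := by
  obtain ⟨p, -, rfl⟩ := hf
  exact (MvPolynomial.continuous_eval p).comp continuous_subtype_val

instance [Finite ι] : FiniteDimensional ℝ (polySpace V n) :=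
  inferInstanceAs (FiniteDimensional ℝ
    ((MvPolynomial.restrictTotalDegree ι ℝ n).map (restrictEval V)))

theorem map_funLeft_inclusion_polySpace (h : X ⊆ V) :
    (polySpace V n).map (LinearMap.funLeft ℝ ℝ (Set.inclusion h)) = polySpace X n := by
  rw [polySpace, ← Submodule.map_comp]
  rfl

theorem HF_mono [Finite ι] (h : X ⊆ V) : HF X n ≤ HF V n := by
  rw [HF, HF, ← map_funLeft_inclusion_polySpace h]
  exact Submodule.finrank_map_le _ _

theorem HF_pos [Finite ι] (hX : X.Nonempty) : 0 < HF X n := by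
  have := hX.to_subtype
  have hone : restrictEval X 1 ∈ polySpace X n := restrictEval_mem_polySpace (by simp)
  refine finrank_pos_iff_exists_ne_zero.2 ⟨⟨_, hone⟩, fun h => ?_⟩
  simpa [restrictEval] using congrFun (congrArg Subtype.val h) (Classical.arbitrary X)

theorem exists_abs_eval_le_sum [Finite ι] (hX : IsCompact X) (n : ℕ) :
    ∃ s : Fin (HF X n) → X, ∀ p : MvPolynomial ι ℝ, p.totalDegree ≤ n → ∀ x ∈ X,
      |MvPolynomial.eval x p| ≤ ∑ i, |MvPolynomial.eval (s i : ι → ℝ) p| := by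
  have := isCompact_iff_compactSpace.1 hX
  obtain ⟨s, hs⟩ := exists_fekete_points (polySpace X n) fun _ => continuous_of_mem_polySpace
  exact ⟨s, fun p hp x hx => hs _ (restrictEval_mem_polySpace hp) ⟨x, hx⟩⟩

end HilbertFunction

/-- `S` is a norming set for the polynomials of total degree at most `n` on `X`, with slack `c`:
it lies in `X` and `sup_X |p| ≤ c * sup_S |p|` for all such `p`. As `S` is finite, the supremum
over `S` is attained and the inequality is stated pointwise. -/
def IsNormingSet {ι : Type*} (n : ℕ) (c : ℝ) (X : Set (ι → ℝ)) (S : Finset (ι → ℝ)) : Prop :=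
  ↑S ⊆ X ∧ ∀ p : MvPolynomial ι ℝ, p.totalDegree ≤ n → ∀ x ∈ X, ∃ y ∈ S,
    |MvPolynomial.eval x p| ≤ c * |MvPolynomial.eval y p|

theorem IsNormingSet.nonempty {ι : Type*} {n : ℕ} {c : ℝ} {X : Set (ι → ℝ)}
    {S : Finset (ι → ℝ)} (hS : IsNormingSet n c X S) (hX : X.Nonempty) : S.Nonempty := by
  obtain ⟨x, hx⟩ := hX
  obtain ⟨y, hy, -⟩ := hS.2 0 (by simp) x hx
  exact ⟨y, hy⟩

theorem exists_le_mul_of_pow_le_sum_pow {ι : Type*} [Fintype ι] [Nonempty ι] {a c : ℝ}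
    {b : ι → ℝ} {r : ℕ} (hr : r ≠ 0) (hc : 0 ≤ c) (hb : ∀ i, 0 ≤ b i)
    (hcard : (Fintype.card ι : ℝ) ≤ c ^ r) (h : a ^ r ≤ ∑ i, b i ^ r) :
    ∃ i, a ≤ c * b i := by
  obtain ⟨i, hi⟩ := Finite.exists_max b
  refine ⟨i, le_of_pow_le_pow_left₀ hr (mul_nonneg hc (hb i)) ?_⟩
  calc a ^ r ≤ ∑ j, b j ^ r := h
    _ ≤ ∑ _j : ι, b i ^ r := Finset.sum_le_sum fun j _ => pow_le_pow_left₀ (hb j) (hi j) r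
    _ = Fintype.card ι * b i ^ r := by simp
    _ ≤ c ^ r * b i ^ r := mul_le_mul_of_nonneg_right hcard (pow_nonneg (hb i) r)
    _ = (c * b i) ^ r := (mul_pow c (b i) r).symm

theorem exists_isNormingSet_of_HF_le_pow {ι : Type} [Finite ι] {X : Set (ι → ℝ)}
    (hX : IsCompact X) {n r : ℕ} {c : ℝ} (hr : r ≠ 0) (hc : 0 ≤ c)
    (hHF : (HF X (r * n) : ℝ) ≤ c ^ r) :
    ∃ S : Finset (ι → ℝ), IsNormingSet n c X S ∧ S.card ≤ HF X (r * n) := by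
  classical
  obtain ⟨s, hs⟩ := exists_abs_eval_le_sum hX (r * n)
  refine ⟨Finset.univ.image fun i => (s i : ι → ℝ), ⟨?_, fun p hp x hx => ?_⟩, ?_⟩
  · simp [Set.range_subset_iff]
  · have : Nonempty (Fin (HF X (r * n))) := Fin.pos_iff_nonempty.1 (HF_pos ⟨x, hx⟩)
    have hpow := hs (p ^ r) ((p.totalDegree_pow r).trans (Nat.mul_le_mul_left r hp)) x hx
    simp only [map_pow, abs_pow] at hpow
    obtain ⟨i, hi⟩ := exists_le_mul_of_pow_le_sum_pow hr hc (fun _ => abs_nonneg _)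
      (by rwa [Fintype.card_fin]) hpow
    exact ⟨s i, Finset.mem_image_of_mem _ (Finset.mem_univ i), hi⟩
  · exact Finset.card_image_le.trans_eq (Finset.card_fin _)

theorem mul_cube_pow_le_two_pow {k t : ℕ} (ht : 0 < t) (hkt : k ≤ t) :
    (240 * t ^ 3) ^ k ≤ 2 ^ (16 * t ^ 2) := by
  have hbase : 240 * t ^ 3 ≤ 2 ^ (16 * t) :=
    calc 240 * t ^ 3 ≤ 2 ^ 8 * (2 ^ t) ^ 3 := by
          gcongr
          · norm_num
          · exact Nat.lt_two_pow_self.le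
      _ = 2 ^ (8 + t * 3) := by rw [pow_add, pow_mul 2 t 3]
      _ ≤ 2 ^ (16 * t) := Nat.pow_le_pow_right two_pos (by lia)
  calc (240 * t ^ 3) ^ k ≤ (240 * t ^ 3) ^ t := Nat.pow_le_pow_right (by positivity) hkt
    _ ≤ (2 ^ (16 * t)) ^ t := Nat.pow_le_pow_left hbase t
    _ = 2 ^ (16 * t ^ 2) := by rw [← pow_mul, mul_assoc, sq]

theorem mul_cube_le_pow_seven {t : ℕ} (ht : 4 ≤ t) : 240 * t ^ 3 ≤ t ^ 7 :=
  calc 240 * t ^ 3 ≤ 4 ^ 4 * t ^ 3 := Nat.mul_le_mul_right _ (by norm_num)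
    _ ≤ t ^ 4 * t ^ 3 := Nat.mul_le_mul_right _ (Nat.pow_le_pow_left ht 4)
    _ = t ^ 7 := (pow_add t 4 3).symm

theorem exists_isNormingSet_of_HF_growth {ι : Type} [Finite ι] {X V : Set (ι → ℝ)}
    (hX : IsCompact X) (hXV : X ⊆ V) {k n : ℕ} (hk : 1 ≤ k) (hn : 1 ≤ n)
    (hV : ∀ m, 1 ≤ m → HF V m ≤ (15 * m) ^ k) :
    ∃ S : Finset (ι → ℝ), IsNormingSet n 2 X S ∧ S.card ≤ ((n + 1) * (k + 1)) ^ (7 * k) := by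
  set t := (n + 1) * (k + 1)
  have ht : 4 ≤ t := Nat.mul_le_mul (by lia : 2 ≤ n + 1) (by lia : 2 ≤ k + 1)
  have hnt : n ≤ t := n.le_succ.trans (Nat.le_mul_of_pos_right _ k.succ_pos)
  have hkt : k ≤ t := k.le_succ.trans (Nat.le_mul_of_pos_left _ n.succ_pos)
  have hr : 0 < 16 * t ^ 2 := by positivity
  have hHF : HF X (16 * t ^ 2 * n) ≤ (240 * t ^ 3) ^ k :=
    calc HF X (16 * t ^ 2 * n) ≤ HF V (16 * t ^ 2 * n) := HF_mono hXV
      _ ≤ (15 * (16 * t ^ 2 * n)) ^ k := hV _ (Nat.mul_pos hr hn)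
      _ ≤ (15 * (16 * t ^ 2 * t)) ^ k := by gcongr
      _ = (240 * t ^ 3) ^ k := by ring
  have hslack : HF X (16 * t ^ 2 * n) ≤ 2 ^ (16 * t ^ 2) :=
    hHF.trans (mul_cube_pow_le_two_pow (by lia) hkt)
  obtain ⟨S, hS, hcard⟩ :=
    exists_isNormingSet_of_HF_le_pow hX hr.ne' zero_le_two (by exact_mod_cast hslack)
  refine ⟨S, hS, ?_⟩
  calc S.card ≤ (240 * t ^ 3) ^ k := hcard.trans hHF
    _ ≤ (t ^ 7) ^ k := Nat.pow_le_pow_left (mul_cube_le_pow_seven ht) k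
    _ = t ^ (7 * k) := (pow_mul t 7 k).symm

/-- **Constant norming sets for varieties.** There is a universal constant `C > 0` such
that: if `V ⊆ ℝ^d` satisfies `HF_V(m) ≤ (15m)^k` for all `m ≥ 1` (with `k ≥ 1`), and `𝒳`
is a nonempty compact subset of `V`, then for every degree `n ≥ 1` there is a finite set
`S ⊆ 𝒳` with `log |S| ≤ C·k·log((n+1)(k+1))` such that every polynomial of total degree
at most `n` satisfies `sup_𝒳 |p| ≤ 2 · sup_S |p|`. -/
theorem stmt_10 :
    ∃ C : ℝ, 0 < C ∧
      ∀ (d : ℕ) (V : Set (Fin d → ℝ)) (k : ℕ), 1 ≤ k →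
        (∀ m : ℕ, 1 ≤ m → (HF V m : ℝ) ≤ (15 * m : ℝ) ^ k) →
        ∀ X : Set (Fin d → ℝ), X.Nonempty → IsCompact X → X ⊆ V →
          ∀ n : ℕ, 1 ≤ n →
            ∃ S : Finset (Fin d → ℝ), ↑S ⊆ X ∧ S.Nonempty ∧
              Real.log S.card ≤ C * k * Real.log (((n : ℝ) + 1) * ((k : ℝ) + 1)) ∧
              ∀ p : MvPolynomial (Fin d) ℝ, p.totalDegree ≤ n →
                ∀ x ∈ X, ∃ y ∈ S,
                  |MvPolynomial.eval x p| ≤ 2 * |MvPolynomial.eval y p| := by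
  refine ⟨7, by norm_num, fun d V k hk hV X hne hX hXV n hn => ?_⟩
  obtain ⟨S, hS, hcard⟩ := exists_isNormingSet_of_HF_growth hX hXV hk hn
    fun m hm => by exact_mod_cast hV m hm
  have hSne : S.Nonempty := hS.nonempty hne
  refine ⟨S, hS.1, hSne, ?_, hS.2⟩
  calc Real.log S.card ≤ Real.log ((((n : ℝ) + 1) * ((k : ℝ) + 1)) ^ (7 * k)) :=
        Real.log_le_log (by exact_mod_cast hSne.card_pos) (by exact_mod_cast hcard)
    _ = 7 * k * Real.log (((n : ℝ) + 1) * ((k : ℝ) + 1)) := by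
        rw [Real.log_pow]
        push_cast
        rfl
end

section
/- Let 𝒳 ⊆ ℝ^d be a nonempty compact set and n ∈ ℕ. Let W be the space of restrictions to 𝒳 of real polynomials of total degree at most n, let N = dim W, and let p₁, …, p_N be polynomials of degree at most n whose restrictions to 𝒳 form a basis of W. Suppose (x₁, …, x_N) ∈ 𝒳^N maximizes the function (y₁, …, y_N) ↦ |det (pᵢ(yⱼ))_{i,j}| over 𝒳^N (such a maximizer exists by compactness, and the maximum value is nonzero). Then for every real polynomial p of total degree at most n, sup_{x ∈ 𝒳} |p(x)| ≤ N · max_{1 ≤ j ≤ N} |p(xⱼ)|. -/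
/-!
For a linearly independent family `f` with a Fekete tuple `x`, the functions
`t ↦ det (f, x with x j replaced by t) / det (f, x)` are the Lagrange basis of `span f` at the
nodes `x j` by Cramer's rule, and maximality of the determinant at `x` bounds each of them by `1`.
Expanding `g ∈ span f` in this basis gives `‖g t‖ ≤ ∑ j, ‖g (x j)‖`.
-/

section GeneralizedVandermonde

variable {ι T R K : Type*}

/-- The generalized Vandermonde matrix `(fᵢ(yⱼ))ᵢⱼ` of a family of functions `f` at a tuple of
points `y`; rows are indexed by functions and columns by points. -/
def generalizedVandermonde (f : ι → T → R) (y : ι → T) : Matrix ι ι R :=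
  Matrix.of fun i j => f i (y j)

theorem generalizedVandermonde_update [DecidableEq ι] (f : ι → T → R) (x : ι → T) (j : ι) (t : T) :
    generalizedVandermonde f (Function.update x j t) =
      (generalizedVandermonde f x).updateCol j (flip f t) := by
  ext i k
  by_cases hk : k = j <;> simp [generalizedVandermonde, flip, hk]

variable [Fintype ι] [DecidableEq ι]

theorem det_generalizedVandermonde_mul_apply [CommRing R] {f : ι → T → R} {g : T → R}
    (hg : g ∈ Submodule.span R (Set.range f)) (x : ι → T) (t : T) :
    (generalizedVandermonde f x).det * g t =
      ∑ j, (generalizedVandermonde f (Function.update x j t)).det * g (x j) := by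
  obtain ⟨c, rfl⟩ := (Submodule.mem_span_range_iff_exists_fun R).1 hg
  have apply_eq_dotProduct (s : T) : (∑ i, c i • f i) s = c ⬝ᵥ flip f s := by
    simp [dotProduct, flip]
  set M := generalizedVandermonde f x
  have vecMul_apply (j : ι) : Matrix.vecMul c M j = (∑ i, c i • f i) (x j) :=
    (apply_eq_dotProduct (x j)).symm
  calc M.det * (∑ i, c i • f i) t
      = c ⬝ᵥ Matrix.mulVec M (M.cramer (flip f t)) := by
        rw [apply_eq_dotProduct, Matrix.mulVec_cramer, dotProduct_smul, smul_eq_mul]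
    _ = ∑ j, Matrix.vecMul c M j * M.cramer (flip f t) j := Matrix.dotProduct_mulVec ..
    _ = _ := by
        refine Finset.sum_congr rfl fun j _ => ?_
        rw [vecMul_apply, Matrix.cramer_apply, ← generalizedVandermonde_update, mul_comm]

theorem exists_det_generalizedVandermonde_ne_zero [Field K] {f : ι → T → K}
    (hf : LinearIndependent K f) : ∃ y : ι → T, (generalizedVandermonde f y).det ≠ 0 := by
  have hspan : Submodule.span K (Set.range (flip f)) = ⊤ :=
    span_flip_eq_top_iff_linearIndependent.2 hf
  obtain ⟨κ, a, -, ha_span, ha_ind⟩ := exists_linearIndependent' K (flip f)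
  let b : Module.Basis κ K (ι → K) := .mk ha_ind (ha_span.trans hspan).ge
  let e : ι ≃ κ := (Pi.basisFun K ι).indexEquiv b
  refine ⟨a ∘ e, ?_⟩
  have hcols : LinearIndependent K (generalizedVandermonde f (a ∘ e)).col :=
    ha_ind.comp e e.injective
  exact ((Matrix.isUnit_iff_isUnit_det _).1
    (Matrix.linearIndependent_cols_iff_isUnit.1 hcols)).ne_zero

end GeneralizedVandermonde

section Fekete

variable {ι T 𝕜 : Type*} [Fintype ι] [DecidableEq ι] [NormedField 𝕜]

/-- A Fekete tuple of a family of functions `f`: points `x` at which the absolute value of the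
generalized Vandermonde determinant of `f` is maximal among all tuples of points of the domain. -/
def IsFekete (f : ι → T → 𝕜) (x : ι → T) : Prop :=
  ∀ y : ι → T, ‖(generalizedVandermonde f y).det‖ ≤ ‖(generalizedVandermonde f x).det‖

namespace IsFekete

variable {f : ι → T → 𝕜} {x : ι → T} {g : T → 𝕜}

theorem det_ne_zero (hx : IsFekete f x) (hf : LinearIndependent 𝕜 f) :
    (generalizedVandermonde f x).det ≠ 0 := by
  obtain ⟨y, hy⟩ := exists_det_generalizedVandermonde_ne_zero hf
  exact norm_pos_iff.1 ((norm_pos_iff.2 hy).trans_le (hx y))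

theorem norm_apply_le_sum (hx : IsFekete f x) (hf : LinearIndependent 𝕜 f)
    (hg : g ∈ Submodule.span 𝕜 (Set.range f)) (t : T) : ‖g t‖ ≤ ∑ j, ‖g (x j)‖ := by
  refine le_of_mul_le_mul_left ?_ (norm_pos_iff.2 (hx.det_ne_zero hf))
  calc ‖(generalizedVandermonde f x).det‖ * ‖g t‖
      = ‖∑ j, (generalizedVandermonde f (Function.update x j t)).det * g (x j)‖ := by
        rw [← norm_mul, det_generalizedVandermonde_mul_apply hg]
    _ ≤ ∑ j, ‖(generalizedVandermonde f (Function.update x j t)).det‖ * ‖g (x j)‖ := by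
        simpa only [norm_mul] using norm_sum_le Finset.univ
          fun j => (generalizedVandermonde f (Function.update x j t)).det * g (x j)
    _ ≤ ∑ j, ‖(generalizedVandermonde f x).det‖ * ‖g (x j)‖ := by
        gcongr with j
        exact hx _
    _ = ‖(generalizedVandermonde f x).det‖ * ∑ j, ‖g (x j)‖ := (Finset.mul_sum ..).symm

theorem exists_norm_apply_le_card_mul [Nonempty ι] (hx : IsFekete f x)
    (hf : LinearIndependent 𝕜 f) (hg : g ∈ Submodule.span 𝕜 (Set.range f)) :
    ∃ j, ∀ t, ‖g t‖ ≤ Fintype.card ι * ‖g (x j)‖ := by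
  obtain ⟨j, hj⟩ := Finite.exists_max fun j => ‖g (x j)‖
  refine ⟨j, fun t => (hx.norm_apply_le_sum hf hg t).trans ?_⟩
  simpa using Finset.sum_le_card_nsmul Finset.univ _ _ fun i _ => hj i

end IsFekete

end Fekete

section Polynomial

variable {σ : Type} {X : Set (σ → ℝ)} {n : ℕ}

theorem restrictEval_mem_polySpace_s11 {q : MvPolynomial σ ℝ} (hq : q.totalDegree ≤ n) :
    restrictEval X q ∈ polySpace X n :=
  Submodule.mem_map_of_mem ((MvPolynomial.mem_restrictTotalDegree _ _ _).2 hq)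

theorem polySpace_ne_bot (hX : X.Nonempty) : polySpace X n ≠ ⊥ := by
  obtain ⟨z, hz⟩ := hX
  refine (Submodule.ne_bot_iff _).2
    ⟨restrictEval X 1, restrictEval_mem_polySpace_s11 (by simp), fun h => ?_⟩
  simpa [restrictEval] using congrFun h ⟨z, hz⟩

theorem nonempty_of_polySpace_le_span {ι : Type*} {f : ι → X → ℝ} (hX : X.Nonempty)
    (hf : polySpace X n ≤ Submodule.span ℝ (Set.range f)) : Nonempty ι := by
  by_contra hι
  rw [not_nonempty_iff] at hι
  rw [Set.range_eq_empty, Submodule.span_empty, le_bot_iff] at hf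
  exact polySpace_ne_bot hX hf

theorem stmt_11_general {ι : Type*} [Fintype ι] [DecidableEq ι] (hX : X.Nonempty)
    {p : ι → MvPolynomial σ ℝ} (hind : LinearIndependent ℝ fun i => restrictEval X (p i))
    (hspan : polySpace X n ≤ Submodule.span ℝ (Set.range fun i => restrictEval X (p i)))
    {x : ι → X} (hx : IsFekete (fun i => restrictEval X (p i)) x)
    {q : MvPolynomial σ ℝ} (hq : q.totalDegree ≤ n) :
    ∃ j, ∀ z ∈ X, |MvPolynomial.eval z q| ≤
      Fintype.card ι * |MvPolynomial.eval (x j).1 q| := by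
  have := nonempty_of_polySpace_le_span hX hspan
  obtain ⟨j, hj⟩ :=
    hx.exists_norm_apply_le_card_mul hind (hspan (restrictEval_mem_polySpace_s11 hq))
  exact ⟨j, fun z hz => hj ⟨z, hz⟩⟩

end Polynomial

/-- **Fekete sets are norming sets.** Let `𝒳 ⊆ ℝ^d` be nonempty and compact, let `W` be
the space of restrictions to `𝒳` of polynomials of total degree at most `n`, and let
`N = dim W = HF_𝒳(n)`. Let `p₁, …, p_N` be polynomials of degree at most `n` whose
restrictions to `𝒳` form a basis of `W`, and let `(x₁, …, x_N) ∈ 𝒳^N` maximize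
`|det (pᵢ(yⱼ))ᵢⱼ|` over `𝒳^N` (a Fekete set). Then every polynomial `q` of degree at
most `n` satisfies `sup_{z ∈ 𝒳} |q(z)| ≤ N · maxⱼ |q(xⱼ)|`. -/
theorem stmt_11 (d n : ℕ) (X : Set (Fin d → ℝ)) (hne : X.Nonempty) (hX : IsCompact X)
    (p : Fin (HF X n) → MvPolynomial (Fin d) ℝ)
    (hdeg : ∀ i, (p i).totalDegree ≤ n)
    (hind : LinearIndependent ℝ (fun i => restrictEval X (p i)))
    (hspan : Submodule.span ℝ (Set.range fun i => restrictEval X (p i)) = polySpace X n)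
    (x : Fin (HF X n) → ↥X)
    (hmax : ∀ y : Fin (HF X n) → ↥X,
      |(Matrix.of fun i j => MvPolynomial.eval (y j).1 (p i)).det| ≤
        |(Matrix.of fun i j => MvPolynomial.eval (x j).1 (p i)).det|) :
    ∀ q : MvPolynomial (Fin d) ℝ, q.totalDegree ≤ n →
      ∀ z ∈ X, ∃ j, |MvPolynomial.eval z q| ≤
        (HF X n : ℝ) * |MvPolynomial.eval (x j).1 q| := by
  intro q hq z hz
  obtain ⟨j, hj⟩ := stmt_11_general hne hind hspan.ge hmax hq
  exact ⟨j, by simpa only [Fintype.card_fin] using hj z hz⟩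
end

section
/- Let d, k, n ∈ ℕ with 0 < k < d, and let V = {x ∈ ℝ^d : x has at most k nonzero coordinates} be the set of k-sparse vectors (the union of all k-dimensional coordinate subspaces). Then HF_V(n) = Σ_{j=0}^{k} C(d, j)·C(n, j), where C(·,·) denotes the binomial coefficient. -/
/-!
On a union `V` of coordinate subspaces `ℝ^S`, a monomial vanishes identically unless its support is
one of the sets `S`. The surviving monomials are linearly independent on `V`: restricting a
polynomial to `ℝ^S` keeps exactly its monomials with support in `S`, and a polynomial vanishing on
all of `ℝ^S` has no such monomial. So the Hilbert function counts the exponents of degree at most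
`n` whose support is an allowed set; by Pascal's rule, `n.choose #S` of them have support `S`.
-/

open MvPolynomial

section Exponents

variable {σ : Type*}

lemma setOf_mem_support_eq_range_add_single (i : σ) :
    {s : σ →₀ ℕ | i ∈ s.support} = Set.range (· + Finsupp.single i 1) := by
  classical
  ext s
  constructor
  · intro hi
    have single_le : Finsupp.single i 1 ≤ s :=
      Finsupp.single_le_iff.2 (Nat.one_le_iff_ne_zero.2 (Finsupp.mem_support_iff.1 hi))
    exact ⟨s - Finsupp.single i 1, tsub_add_cancel_of_le single_le⟩
  · rintro ⟨t, rfl⟩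
    simp

lemma insert_eq_insert_iff_of_notMem [DecidableEq σ] {S : Finset σ} {i : σ} (hi : i ∉ S)
    (T : Finset σ) : insert i T = insert i S ↔ T = S ∨ T = insert i S := by
  constructor
  · intro h
    by_cases hT : i ∈ T
    · exact .inr (by rwa [Finset.insert_eq_of_mem hT] at h)
    · exact .inl (by rw [← Finset.erase_insert hT, h, Finset.erase_insert hi])
  · rintro (rfl | rfl) <;> simp

lemma setOf_support_eq_insert_degree_le_succ [DecidableEq σ] {S : Finset σ} {i : σ}
    (hi : i ∉ S) (n : ℕ) :
    {s : σ →₀ ℕ | s.support = insert i S ∧ s.degree ≤ n + 1} =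
      (· + Finsupp.single i 1) ''
        ({s | s.support = S ∧ s.degree ≤ n} ∪ {s | s.support = insert i S ∧ s.degree ≤ n}) := by
  have support_add (t : σ →₀ ℕ) : (t + Finsupp.single i 1).support = insert i t.support := by
    rw [Finsupp.support_add_eq_union, Finsupp.support_single _ one_ne_zero, Finset.union_comm,
      Finset.insert_eq]
  have mem_iff (t : σ →₀ ℕ) :
      (t + Finsupp.single i 1).support = insert i S ∧ (t + Finsupp.single i 1).degree ≤ n + 1 ↔
        (t.support = S ∧ t.degree ≤ n) ∨ (t.support = insert i S ∧ t.degree ≤ n) := by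
    rw [support_add, insert_eq_insert_iff_of_notMem hi, map_add, Finsupp.degree_single,
      Nat.add_le_add_iff_right, or_and_right]
  ext s
  constructor
  · intro hs
    have mem_support : i ∈ s.support := hs.1 ▸ Finset.mem_insert_self i S
    obtain ⟨t, rfl⟩ := (setOf_mem_support_eq_range_add_single i).le mem_support
    exact ⟨t, (mem_iff t).1 hs, rfl⟩
  · rintro ⟨t, ht, rfl⟩
    exact (mem_iff t).2 ht

lemma encard_setOf_support_eq_degree_le (S : Finset σ) (n : ℕ) :
    {s : σ →₀ ℕ | s.support = S ∧ s.degree ≤ n}.encard = n.choose S.card := by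
  classical
  induction S using Finset.induction_on generalizing n with
  | empty =>
    have eq_zero : {s : σ →₀ ℕ | s.support = ∅ ∧ s.degree ≤ n} = {0} := by
      ext s
      simp +contextual
    rw [eq_zero, Set.encard_singleton, Finset.card_empty, Nat.choose_zero_right, Nat.cast_one]
  | insert i S hi ih =>
    induction n with
    | zero =>
      have eq_empty : {s : σ →₀ ℕ | s.support = insert i S ∧ s.degree ≤ 0} = ∅ := by
        refine Set.eq_empty_of_forall_notMem fun s hs => Finset.insert_ne_empty i S ?_
        rw [← hs.1, (Finsupp.degree_eq_zero_iff s).1 (Nat.le_zero.1 hs.2), Finsupp.support_zero]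
      rw [eq_empty, Set.encard_empty, Finset.card_insert_of_notMem hi, Nat.choose_zero_succ,
        Nat.cast_zero]
    | succ n ihn =>
      have disjoint : Disjoint {s : σ →₀ ℕ | s.support = S ∧ s.degree ≤ n}
          {s | s.support = insert i S ∧ s.degree ≤ n} :=
        Set.disjoint_left.2 fun s hs hs' => hi (hs.1 ▸ hs'.1 ▸ Finset.mem_insert_self i S)
      rw [setOf_support_eq_insert_degree_le_succ hi,
        (add_left_injective (Finsupp.single i 1)).encard_image, Set.encard_union_eq disjoint, ih,
        ihn, Finset.card_insert_of_notMem hi, Nat.choose_succ_succ, Nat.cast_add]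

lemma ncard_setOf_support_mem_degree_le (Δ : Finset (Finset σ)) (n : ℕ) :
    {s : σ →₀ ℕ | s.support ∈ Δ ∧ s.degree ≤ n}.ncard = ∑ S ∈ Δ, n.choose S.card := by
  have eq_biUnion : {s : σ →₀ ℕ | s.support ∈ Δ ∧ s.degree ≤ n} =
      ⋃ S ∈ (Δ : Set (Finset σ)), {s | s.support = S ∧ s.degree ≤ n} := by
    ext s
    simp
  have disjoint : (Δ : Set (Finset σ)).PairwiseDisjoint
      fun S => {s : σ →₀ ℕ | s.support = S ∧ s.degree ≤ n} :=
    fun S _ T _ hST => Set.disjoint_left.2 fun s hS hT => hST (hS.1.symm.trans hT.1)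
  rw [Set.ncard_def, eq_biUnion, Δ.finite_toSet.encard_biUnion disjoint,
    finsum_mem_coe_finset]
  simp only [encard_setOf_support_eq_degree_le, ← Nat.cast_sum, ENat.toNat_natCast]

end Exponents

lemma sum_filter_card_le {α M : Type*} [Fintype α] [AddCommMonoid M] (k : ℕ) (f : ℕ → M) :
    ∑ S : Finset α with S.card ≤ k, f S.card =
      ∑ j ∈ Finset.range (k + 1), (Fintype.card α).choose j • f j := by
  classical
  have card_mem_range : ∀ S ∈ ({S | S.card ≤ k} : Finset (Finset α)),
      S.card ∈ Finset.range (k + 1) := by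
    simp
  rw [← Finset.sum_fiberwise_of_maps_to card_mem_range]
  refine Finset.sum_congr rfl fun j hj => ?_
  have fiber_eq : {S ∈ ({S | S.card ≤ k} : Finset (Finset α)) | S.card = j} =
      Finset.powersetCard j Finset.univ := by
    ext S
    have card_le (hS : S.card = j) : S.card ≤ k := hS ▸ Finset.mem_range_succ_iff.1 hj
    simpa using card_le
  rw [fiber_eq, Finset.sum_powersetCard, Finset.card_univ]

/-- The union of the coordinate subspaces `R^S`, for `S` in a family `Δ` of finite sets of
coordinates. When `Δ` is a simplicial complex, this is the zero set of its Stanley–Reisner ideal. -/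
def coordinateArrangement {ι : Type*} (R : Type*) [Zero R] (Δ : Set (Finset ι)) : Set (ι → R) :=
  {x | ∃ S ∈ Δ, ∀ i, i ∉ S → x i = 0}

section Vanishing

variable {ι R : Type*} [CommSemiring R]

lemma eval_monomial_eq_zero_of_support_notMem {Δ : Set (Finset ι)} (hΔ : IsLowerSet Δ)
    {x : ι → R} (hx : x ∈ coordinateArrangement R Δ) {s : ι →₀ ℕ} (hs : s.support ∉ Δ) (c : R) :
    eval x (monomial s c) = 0 := by
  obtain ⟨S, hS, hxS⟩ := hx
  obtain ⟨i, his, hiS⟩ := Finset.not_subset.1 fun hsS => hs (hΔ hsS hS)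
  rw [eval_monomial, Finsupp.prod,
    Finset.prod_eq_zero his (by rw [hxS i hiS, zero_pow (Finsupp.mem_support_iff.1 his)]), mul_zero]

lemma eval_killCompl {σ : Type*} {f : σ → ι} (hf : f.Injective) (y : σ → R)
    (p : MvPolynomial ι R) : eval y (killCompl hf p) = eval (Function.extend f y 0) p := by
  have comp_eq : (aeval y).comp (killCompl (R := R) hf) = aeval (Function.extend f y 0) := by
    ext i
    by_cases hi : i ∈ Set.range f
    · obtain ⟨a, rfl⟩ := hi
      rw [AlgHom.comp_apply, ← rename_X f, killCompl_rename_app, rename_X, aeval_X, aeval_X,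
        hf.extend_apply]
    · rw [AlgHom.comp_apply, killCompl, aeval_X, dif_neg hi, map_zero, aeval_X,
        Function.extend_apply' _ _ _ hi, Pi.zero_apply]
  exact DFunLike.congr_fun comp_eq p

lemma coeff_eq_zero_of_eval_eq_zero {R : Type*} [CommRing R] [IsDomain R] [Infinite R]
    {S : Set ι} {p : MvPolynomial ι R}
    (hp : ∀ x : ι → R, (∀ i, i ∉ S → x i = 0) → eval x p = 0)
    {s : ι →₀ ℕ} (hs : ↑s.support ⊆ S) : coeff s p = 0 := by
  have val_injective : Function.Injective (Subtype.val : S → ι) := Subtype.val_injective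
  have killCompl_eq_zero : killCompl val_injective p = 0 := by
    refine MvPolynomial.funext fun y => ?_
    rw [eval_killCompl, map_zero]
    exact hp _ fun i hi => Function.extend_apply' _ _ _ fun ⟨a, ha⟩ => hi (ha ▸ a.2)
  rw [← s.mapDomain_comapDomain _ val_injective (hs.trans_eq Subtype.range_coe.symm),
    ← coeff_killCompl val_injective, killCompl_eq_zero, coeff_zero]

end Vanishing

section HilbertFunction

variable {ι : Type}

lemma disjoint_restrictSupport_ker_restrictEval (Δ : Set (Finset ι)) :
    Disjoint (restrictSupport ℝ {s | s.support ∈ Δ})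
      (LinearMap.ker (restrictEval (coordinateArrangement ℝ Δ))) := by
  rw [LinearMap.disjoint_ker]
  intro p hp hpV
  by_contra hp0
  obtain ⟨s, hs⟩ := ne_zero_iff.1 hp0
  exact hs <| coeff_eq_zero_of_eval_eq_zero
    (fun x hx => congrFun hpV ⟨x, s.support, hp (mem_support_iff.2 hs), hx⟩) subset_rfl

lemma polySpace_coordinateArrangement {Δ : Set (Finset ι)} (hΔ : IsLowerSet Δ) (n : ℕ) :
    polySpace (coordinateArrangement ℝ Δ) n =
      (restrictSupport ℝ {s | s.support ∈ Δ ∧ s.degree ≤ n}).map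
        (restrictEval (coordinateArrangement ℝ Δ)) := by
  refine le_antisymm ?_ (Submodule.map_mono (restrictSupport_mono ℝ fun s hs => hs.2))
  rw [polySpace, restrictTotalDegree, restrictSupport_eq_span, Submodule.map_span_le]
  rintro _ ⟨s, hs, rfl⟩
  by_cases hsΔ : s.support ∈ Δ
  · exact Submodule.mem_map_of_mem ((monomial_mem_restrictSupport ℝ).2 (.inl ⟨hsΔ, hs⟩))
  · have restrict_eq_zero : restrictEval (coordinateArrangement ℝ Δ) (monomial s 1) = 0 :=
      funext fun x => eval_monomial_eq_zero_of_support_notMem hΔ x.2 hsΔ 1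
    exact restrict_eq_zero ▸ Submodule.zero_mem _

lemma HF_coordinateArrangement {Δ : Set (Finset ι)} (hΔ : IsLowerSet Δ) (n : ℕ) :
    HF (coordinateArrangement ℝ Δ) n = {s : ι →₀ ℕ | s.support ∈ Δ ∧ s.degree ≤ n}.ncard := by
  set V := coordinateArrangement ℝ Δ
  set M := {s : ι →₀ ℕ | s.support ∈ Δ ∧ s.degree ≤ n}
  have injective : Function.Injective ((restrictEval V).domRestrict (restrictSupport ℝ M)) :=
    LinearMap.injective_domRestrict_iff.2 <|
      (disjoint_restrictSupport_ker_restrictEval Δ).mono_left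
        (restrictSupport_mono ℝ fun _ hs => hs.1)
  rw [HF, polySpace_coordinateArrangement hΔ, ← LinearMap.range_domRestrict,
    LinearMap.finrank_range_of_inj injective,
    Module.finrank_eq_nat_card_basis (basisRestrictSupport ℝ M), Nat.card_coe_set_eq]

theorem stmt_13_general {Δ : Finset (Finset ι)} (hΔ : IsLowerSet (Δ : Set (Finset ι))) (n : ℕ) :
    HF (coordinateArrangement ℝ (Δ : Set (Finset ι))) n = ∑ S ∈ Δ, n.choose S.card := by
  rw [HF_coordinateArrangement hΔ]
  exact ncard_setOf_support_mem_degree_le Δ n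

end HilbertFunction

lemma isLowerSet_filter_card_le (α : Type*) [Fintype α] (k : ℕ) :
    IsLowerSet (({S | S.card ≤ k} : Finset (Finset α)) : Set (Finset α)) := by
  intro S T hTS hS
  simp_all [(Finset.card_le_card hTS).trans]

/-- **Hilbert function of the variety of `k`-sparse vectors.** For `0 < k < d`, the set
`V ⊆ ℝ^d` of vectors with at most `k` nonzero coordinates (the union of all
`k`-dimensional coordinate subspaces) has `HF_V(n) = Σ_{j=0}^{k} C(d,j)·C(n,j)`. -/
theorem stmt_13 (d k n : ℕ) (hk : 0 < k) (hkd : k < d) :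
    HF {x : Fin d → ℝ | ∃ S : Finset (Fin d), S.card ≤ k ∧ ∀ i, i ∉ S → x i = 0} n =
      ∑ j ∈ Finset.range (k + 1), Nat.choose d j * Nat.choose n j := by
  simpa [coordinateArrangement, sum_filter_card_le k n.choose] using
    stmt_13_general (isLowerSet_filter_card_le (Fin d) k) n
end

section
/- Let m ≥ 1 and n ∈ ℕ, and let V = {x xᵀ : x ∈ ℝ^m} be the set of symmetric rank-at-most-one positive semidefinite m × m real matrices of the form x xᵀ, regarded as a subset of ℝ^{m×m} (coordinates given by the m² matrix entries). Then HF_V(n) = Σ_{k=0}^{n} C(2k + m − 1, m − 1), where C(·,·) denotes the binomial coefficient. -/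
/-!
Pulling functions back along a parametrisation `x ↦ (F i (x))ᵢ` identifies restrictions of
polynomials to its image with the polynomials obtained by substituting the `F i`, because a
polynomial vanishing on all of `ℝ^σ` is zero. When every `F i` is a monomial with exponent `a i`,
substitution turns the monomials of degree `k` into exactly those with exponent in the `k`-fold
sumset of `{a i}`, so the Hilbert function counts the union of these sumsets for `k ≤ n`. For
`x xᵀ` the `a i` are exactly the exponents of degree `2`, the `k`-fold sumset consists of all
exponents of degree `2 * k`, and stars and bars counts them.
-/

open MvPolynomial
open scoped Pointwise

section Exponents

variable {ι σ : Type*}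

theorem nsmul_range_single_one (k : ℕ) :
    k • Set.range (fun i : σ ↦ Finsupp.single i 1) = {d : σ →₀ ℕ | d.degree = k} := by
  simpa only [Set.image_univ, Set.subset_univ, and_true] using
    Finsupp.nsmul_single_one_image (n := k) (s := (Set.univ : Set σ))

theorem image_linearCombination_degree_eq (a : ι → σ →₀ ℕ) (k : ℕ) :
    Finsupp.linearCombination ℕ a '' {e | e.degree = k} = k • Set.range a := by
  rw [← nsmul_range_single_one, Set.image_nsmul, ← Set.range_comp]
  simp only [Function.comp_def, Finsupp.linearCombination_single, one_smul]

theorem image_linearCombination_degree_le (a : ι → σ →₀ ℕ) (n : ℕ) :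
    Finsupp.linearCombination ℕ a '' {e | e.degree ≤ n} =
      ⋃ k ∈ Finset.range (n + 1), k • Set.range a := by
  simp only [← image_linearCombination_degree_eq, ← Set.image_iUnion]
  congr 1
  ext e
  simp

theorem nsmul_range_single_add_single (k : ℕ) :
    k • Set.range (fun q : σ × σ ↦ Finsupp.single q.1 1 + Finsupp.single q.2 1) =
      {d : σ →₀ ℕ | d.degree = 2 * k} := by
  rw [← nsmul_range_single_one, mul_nsmul, two_nsmul, ← Set.image2_add, Set.image2_range]

theorem ncard_setOf_degree_eq [Fintype σ] (k : ℕ) :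
    {d : σ →₀ ℕ | d.degree = k}.ncard = (Fintype.card σ + k - 1).choose k := by
  classical
  have degree_eq_antidiag : {d : σ →₀ ℕ | d.degree = k} =
      ((Finset.univ : Finset σ).finsuppAntidiag k : Set (σ →₀ ℕ)) := by
    ext d
    simp [Finsupp.degree_eq_sum]
  rw [degree_eq_antidiag, Set.ncard_coe_finset, Finset.card_finsuppAntidiag_nat_eq_choose,
    Finset.card_univ]

theorem ncard_biUnion_setOf_degree_eq [Fintype σ] (s : Finset ℕ) {f : ℕ → ℕ}
    (hf : Set.InjOn f s) :
    (⋃ k ∈ s, {d : σ →₀ ℕ | d.degree = f k}).ncard =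
      ∑ k ∈ s, (Fintype.card σ + f k - 1).choose (f k) := by
  have disjoint_levels : (s : Set ℕ).PairwiseDisjoint fun k ↦ {d : σ →₀ ℕ | d.degree = f k} := by
    intro k hk l hl hkl
    exact Set.disjoint_left.2 fun d hdk hdl ↦ hkl (hf hk hl (hdk.symm.trans hdl))
  simpa only [Finset.mem_coe, finsum_mem_finset_eq_sum, ncard_setOf_degree_eq] using
    s.finite_toSet.ncard_biUnion (fun k _ ↦ Finsupp.finite_of_degree_eq (f k)) disjoint_levels

end Exponents

section Monomials

variable {R ι σ : Type*} [CommSemiring R]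

theorem aeval_monomial_one_monomial (a : ι → σ →₀ ℕ) (e : ι →₀ ℕ) (r : R) :
    aeval (fun i ↦ monomial (a i) (1 : R)) (monomial e r) =
      monomial (Finsupp.linearCombination ℕ a e) r := by
  simp only [aeval_monomial, Finsupp.linearCombination_apply, monomial_finsupp_sum_index,
    monomial_pow, one_pow, algebraMap_eq]

theorem map_aeval_monomial_one_restrictSupport (a : ι → σ →₀ ℕ) (s : Set (ι →₀ ℕ)) :
    (restrictSupport R s).map (aeval fun i ↦ monomial (a i) (1 : R)).toLinearMap =
      restrictSupport R (Finsupp.linearCombination ℕ a '' s) := by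
  simp only [restrictSupport_eq_span, Submodule.map_span, Set.image_image, AlgHom.toLinearMap_apply,
    aeval_monomial_one_monomial]

theorem finrank_restrictSupport [StrongRankCondition R] (s : Set (σ →₀ ℕ)) :
    Module.finrank R (restrictSupport R s) = s.ncard :=
  Module.finrank_eq_nat_card_basis (basisRestrictSupport R s)

end Monomials

theorem finrank_map_of_injective {R M N : Type*} [Semiring R] [AddCommMonoid M] [AddCommMonoid N]
    [Module R M] [Module R N] {f : M →ₗ[R] N} (hf : Function.Injective f) (p : Submodule R M) :
    Module.finrank R (p.map f) = Module.finrank R p :=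
  (Submodule.equivMapOfInjective f hf p).finrank_eq.symm

section HilbertFunction

variable {ι : Type} {σ : Type*}

theorem HF_range_eval (F : ι → MvPolynomial σ ℝ) (n : ℕ) :
    HF (Set.range fun (x : σ → ℝ) i ↦ eval x (F i)) n =
      Module.finrank ℝ ((restrictTotalDegree ι ℝ n).map (aeval F).toLinearMap) := by
  set V := Set.range fun (x : σ → ℝ) i ↦ eval x (F i)
  let pullback : (V → ℝ) →ₗ[ℝ] (σ → ℝ) → ℝ := LinearMap.funLeft ℝ ℝ (Set.rangeFactorization _)
  have pullback_injective : Function.Injective pullback :=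
    LinearMap.funLeft_injective_of_surjective ℝ ℝ _ Set.rangeFactorization_surjective
  have evalₗ_injective : Function.Injective (evalₗ ℝ σ) :=
    fun _ _ h ↦ MvPolynomial.funext (congrFun h)
  have pullback_restrict : pullback ∘ₗ restrictEval V = evalₗ ℝ σ ∘ₗ (aeval F).toLinearMap := by
    refine LinearMap.ext fun p ↦ funext fun x ↦ ?_
    exact (comp_aeval_apply F (aeval x) p).symm
  rw [HF, polySpace, ← finrank_map_of_injective pullback_injective, ← Submodule.map_comp,
    pullback_restrict, Submodule.map_comp, finrank_map_of_injective evalₗ_injective]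

theorem HF_range_eval_monomial (a : ι → σ →₀ ℕ) (n : ℕ) :
    HF (Set.range fun (x : σ → ℝ) i ↦ eval x (monomial (a i) 1)) n =
      (⋃ k ∈ Finset.range (n + 1), k • Set.range a).ncard := by
  have restrictTotalDegree_eq :
      restrictTotalDegree ι ℝ n = restrictSupport ℝ {e : ι →₀ ℕ | e.degree ≤ n} := rfl
  rw [HF_range_eval, restrictTotalDegree_eq, map_aeval_monomial_one_restrictSupport,
    finrank_restrictSupport, image_linearCombination_degree_le]

end HilbertFunction

theorem setOf_outer_product_eq_range_eval_monomial {R σ : Type*} [CommSemiring R] :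
    {A : σ × σ → R | ∃ x : σ → R, ∀ q, A q = x q.1 * x q.2} =
      Set.range fun (x : σ → R) q ↦
        eval x (monomial (Finsupp.single q.1 1 + Finsupp.single q.2 1) 1) := by
  ext A
  simp [funext_iff, eq_comm (b := A _), eval_monomial, Finsupp.prod_add_index', pow_add]

/-- **Hilbert function of the variety of symmetric rank-one matrices.** For `m ≥ 1`, the
set `V = {x xᵀ : x ∈ ℝ^m}` of symmetric rank-at-most-one PSD `m × m` matrices, viewed as
a subset of `ℝ^{m×m}` (coordinates indexed by `Fin m × Fin m`), has
`HF_V(n) = Σ_{k=0}^{n} C(2k+m-1, m-1)`. -/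
theorem stmt_14 (m n : ℕ) (hm : 1 ≤ m) :
    HF {A : Fin m × Fin m → ℝ | ∃ x : Fin m → ℝ, ∀ q : Fin m × Fin m, A q = x q.1 * x q.2}
        n =
      ∑ k ∈ Finset.range (n + 1), Nat.choose (2 * k + m - 1) (m - 1) := by
  rw [setOf_outer_product_eq_range_eval_monomial, HF_range_eval_monomial]
  simp only [nsmul_range_single_add_single]
  rw [ncard_biUnion_setOf_degree_eq _ (mul_right_injective₀ two_ne_zero).injOn, Fintype.card_fin]
  refine Finset.sum_congr rfl fun k _ ↦ ?_
  rw [add_comm m]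
  exact Nat.choose_symm_of_eq_add (by omega)
end

section
/- Let k ≥ 1, d = 2k, and n ∈ ℕ, and let V ⊂ ℝ^d be the trigonometric moment curve V = {(cos θ, cos 2θ, …, cos kθ, sin θ, sin 2θ, …, sin kθ) : θ ∈ [0, 2π)}. Then HF_V(n) = d·n + 1. -/
/-!
Composing with a parametrization `γ` of `V` identifies the restrictions to `V` of polynomials of
degree at most `n` with `W ^ n`, where `W` is the space of functions spanned by `1` and the
coordinates of `γ`. For the trigonometric moment curve, `W` is the space of trigonometric
polynomials of degree at most `k`. By the addition formulas its `n`-th power is the space of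
trigonometric polynomials of degree at most `k * n`, whose dimension `2 * k * n + 1` follows from
orthogonality on `[0, 2π]`.
-/

open Submodule Real MeasureTheory

section TotalDegree

open MvPolynomial
open scoped Pointwise

variable (σ R : Type*) [CommSemiring R]

theorem restrictTotalDegree_eq_restrictSupport_degree_preimage (n : ℕ) :
    restrictTotalDegree σ R n = restrictSupport R (Finsupp.degree ⁻¹' Set.Iic n) :=
  rfl

theorem restrictTotalDegree_zero : restrictTotalDegree σ R 0 = 1 := by
  rw [restrictTotalDegree_eq_restrictSupport_degree_preimage, ← restrictSupport_zero]
  congr 1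
  ext d
  simp [Finsupp.degree_eq_zero_iff]

theorem restrictTotalDegree_one :
    restrictTotalDegree σ R 1 = 1 ⊔ span R (Set.range (X : σ → MvPolynomial σ R)) := by
  have degree_le_one : Finsupp.degree ⁻¹' Set.Iic 1 =
      {0} ∪ Set.range fun i : σ ↦ Finsupp.single i 1 := by
    rw [Finsupp.range_single_one]
    ext d
    simp [Nat.le_one_iff_eq_zero_or_eq_one, Finsupp.degree_eq_zero_iff]
  rw [restrictTotalDegree_eq_restrictSupport_degree_preimage, restrictSupport_eq_span,
    degree_le_one, Set.image_union, span_union, Set.image_singleton, ← Set.range_comp,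
    one_eq_span]
  rfl

theorem restrictTotalDegree_add (m n : ℕ) :
    restrictTotalDegree σ R (m + n) = restrictTotalDegree σ R m * restrictTotalDegree σ R n := by
  have Iic_add : Set.Iic (m + n) = Set.Iic m + Set.Iic n :=
    (Set.Iic_add_Iic_subset m n).antisymm' fun d (hd : d ≤ m + n) ↦
      Set.mem_add.2 ⟨min d m, min_le_right d m, d - m, by grind, by grind⟩
  simp only [restrictTotalDegree_eq_restrictSupport_degree_preimage, Iic_add,
    Finsupp.degree_preimage_add, restrictSupport_add]

theorem restrictTotalDegree_eq_pow (n : ℕ) :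
    restrictTotalDegree σ R n = (1 ⊔ span R (Set.range X)) ^ n := by
  induction n with
  | zero => rw [restrictTotalDegree_zero, pow_zero]
  | succ n ih => rw [restrictTotalDegree_add, ih, restrictTotalDegree_one, pow_succ]

variable {σ R} in
theorem map_aeval_restrictTotalDegree {A : Type*} [CommSemiring A] [Algebra R A] (f : σ → A)
    (n : ℕ) :
    (restrictTotalDegree σ R n).map (aeval f).toLinearMap = (1 ⊔ span R (Set.range f)) ^ n := by
  rw [restrictTotalDegree_eq_pow, Submodule.map_pow, Submodule.map_sup, Submodule.map_one,
    map_span, ← Set.range_comp]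
  congr! 5
  ext i
  simp

end TotalDegree

theorem HF_range {ι : Type} {T : Type*} (γ : T → ι → ℝ) (n : ℕ) :
    HF (Set.range γ) n =
      Module.finrank ℝ ↥((1 ⊔ span ℝ (Set.range fun i t ↦ γ t i)) ^ n) := by
  let pullback := LinearMap.funLeft ℝ ℝ (Set.rangeFactorization γ)
  have pullback_injective : Function.Injective pullback :=
    LinearMap.funLeft_injective_of_surjective ℝ ℝ _ Set.rangeFactorization_surjective
  have pullback_comp_restrictEval :
      pullback ∘ₗ restrictEval (Set.range γ) =
        (MvPolynomial.aeval fun i t ↦ γ t i).toLinearMap := by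
    refine LinearMap.ext fun p ↦ funext fun t ↦ ?_
    exact (MvPolynomial.comp_aeval_apply (fun i t ↦ γ t i) (Pi.evalAlgHom ℝ (fun _ ↦ ℝ) t) p).symm
  rw [← map_aeval_restrictTotalDegree, ← pullback_comp_restrictEval, Submodule.map_comp]
  exact (equivMapOfInjective pullback pullback_injective (polySpace _ n)).finrank_eq

theorem linearIndependent_of_integral_mul_eq_zero {ι X 𝕜 : Type*} [RCLike 𝕜] [MeasurableSpace X]
    {μ : Measure X} {f : ι → X → 𝕜} (integrable : ∀ i j, Integrable (fun x ↦ f i x * f j x) μ)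
    (orthogonal : Pairwise fun i j ↦ ∫ x, f i x * f j x ∂μ = 0)
    (self_ne_zero : ∀ i, ∫ x, f i x * f i x ∂μ ≠ 0) : LinearIndependent 𝕜 f := by
  refine linearIndependent_iff'.2 fun s g sum_eq_zero j hj ↦ ?_
  have coeff_mul_eq_zero : g j * ∫ x, f j x * f j x ∂μ = 0 := calc
    g j * ∫ x, f j x * f j x ∂μ = ∑ i ∈ s, g i * ∫ x, f i x * f j x ∂μ := by
      rw [Finset.sum_eq_single_of_mem j hj fun i _ hij ↦ by rw [orthogonal hij, mul_zero]]
    _ = ∫ x, (∑ i ∈ s, g i • f i) x * f j x ∂μ := by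
      simp only [← integral_const_mul, Finset.sum_apply, Pi.smul_apply, smul_eq_mul,
        Finset.sum_mul, mul_assoc]
      exact (integral_finsetSum s fun i _ ↦ (integrable i j).const_mul (g i)).symm
    _ = 0 := by simp only [sum_eq_zero, Pi.zero_apply, zero_mul, integral_zero]
  exact (mul_eq_zero.1 coeff_mul_eq_zero).resolve_right (self_ne_zero j)

/-- The Hartley function `cas (j θ) = cos (j θ) + sin (j θ)` of integer frequency `j`. The family
over all `j : ℤ` replaces the classical trigonometric basis and spares its case distinction between
cosines and sines. -/
noncomputable def hartley (j : ℤ) (θ : ℝ) : ℝ :=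
  cos (j * θ) + sin (j * θ)

theorem continuous_hartley (j : ℤ) : Continuous (hartley j) := by
  unfold hartley
  fun_prop

theorem hartley_zero : hartley 0 = 1 := by
  ext θ
  simp [hartley]

theorem hartley_neg (j : ℤ) (θ : ℝ) : hartley (-j) θ = cos (j * θ) - sin (j * θ) := by
  simp only [hartley, Int.cast_neg, neg_mul, cos_neg, sin_neg, sub_eq_add_neg]

theorem hartley_mul_hartley (a b : ℤ) (θ : ℝ) :
    hartley a θ * hartley b θ = cos ((a - b : ℤ) * θ) + sin ((a + b : ℤ) * θ) := by
  simp only [hartley, Int.cast_sub, Int.cast_add, sub_mul, add_mul, cos_sub, sin_add]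
  ring

theorem hartley_add (a b : ℤ) (θ : ℝ) :
    hartley (a + b) θ = cos (a * θ) * hartley b θ + sin (a * θ) * hartley (-b) θ := by
  rw [hartley_neg]
  simp only [hartley, Int.cast_add, add_mul, cos_add, sin_add]
  ring

theorem cos_int_mul_eq_smul_hartley (j : ℤ) :
    (fun θ : ℝ ↦ cos (j * θ)) = (2⁻¹ : ℝ) • (hartley j + hartley (-j)) := by
  ext θ
  rw [Pi.smul_apply, Pi.add_apply, smul_eq_mul, hartley_neg, hartley]
  ring

theorem sin_int_mul_eq_smul_hartley (j : ℤ) :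
    (fun θ : ℝ ↦ sin (j * θ)) = (2⁻¹ : ℝ) • (hartley j - hartley (-j)) := by
  ext θ
  rw [Pi.smul_apply, Pi.sub_apply, smul_eq_mul, hartley_neg, hartley]
  ring

theorem integral_cos_int_mul {m : ℤ} (hm : m ≠ 0) : ∫ θ in 0..2 * π, cos (m * θ) = 0 := by
  have sin_period : sin (m * (2 * π)) = 0 := by
    simpa using sin_add_int_mul_two_pi 0 m
  rw [intervalIntegral.integral_comp_mul_left cos (Int.cast_ne_zero.2 hm), integral_cos]
  simp [sin_period]

theorem integral_sin_int_mul (m : ℤ) : ∫ θ in 0..2 * π, sin (m * θ) = 0 := by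
  obtain rfl | hm := eq_or_ne m 0
  · simp
  · rw [intervalIntegral.integral_comp_mul_left sin (Int.cast_ne_zero.2 hm), integral_sin]
    simp [cos_int_mul_two_pi]

theorem integral_hartley_mul_hartley (a b : ℤ) :
    ∫ θ in 0..2 * π, hartley a θ * hartley b θ = if a = b then 2 * π else 0 := by
  simp only [hartley_mul_hartley]
  rw [intervalIntegral.integral_add (Continuous.intervalIntegrable (by fun_prop) _ _)
    (Continuous.intervalIntegrable (by fun_prop) _ _), integral_sin_int_mul, add_zero]
  split_ifs with hab
  · simp [hab]
  · exact integral_cos_int_mul (sub_ne_zero.2 hab)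

theorem linearIndependent_hartley : LinearIndependent ℝ hartley := by
  have integral_eq (a b : ℤ) :
      ∫ θ in Set.Ioc 0 (2 * π), hartley a θ * hartley b θ = if a = b then 2 * π else 0 := by
    rw [← intervalIntegral.integral_of_le two_pi_pos.le, integral_hartley_mul_hartley]
  refine linearIndependent_of_integral_mul_eq_zero (μ := volume.restrict (Set.Ioc 0 (2 * π)))
    (fun a b ↦ ?_) (fun a b hab ↦ ?_) fun a ↦ ?_
  · exact ((continuous_hartley a).mul (continuous_hartley b)).integrableOn_Ioc
  · exact (integral_eq a b).trans (if_neg hab)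
  · rw [integral_eq, if_pos rfl]
    exact two_pi_pos.ne'

/-- The space of real trigonometric polynomials of degree at most `N`, as functions on `ℝ`. It is
defined through the Hartley functions, whose span contains all `cos (j θ)` and `sin (j θ)` with
`|j| ≤ N`. -/
noncomputable def trigPoly (N : ℕ) : Submodule ℝ (ℝ → ℝ) :=
  span ℝ (hartley '' Set.Icc (-N) N)

theorem finrank_trigPoly (N : ℕ) : Module.finrank ℝ (trigPoly N) = 2 * N + 1 := by
  have independent : LinearIndependent ℝ fun j : Set.Icc (-N : ℤ) N ↦ hartley j :=
    linearIndependent_hartley.comp _ Subtype.val_injective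
  rw [trigPoly, Set.image_eq_range, finrank_span_eq_card independent,
    Fintype.card_ofFinset, Int.card_Icc]
  omega

section trigPoly

variable {N : ℕ} {j : ℤ}

theorem hartley_mem_trigPoly (hj : j ∈ Set.Icc (-N : ℤ) N) : hartley j ∈ trigPoly N :=
  subset_span (Set.mem_image_of_mem _ hj)

theorem hartley_neg_mem_trigPoly (hj : j ∈ Set.Icc (-N : ℤ) N) : hartley (-j) ∈ trigPoly N :=
  hartley_mem_trigPoly ⟨neg_le_neg hj.2, neg_le.1 hj.1⟩

theorem cos_int_mul_mem_trigPoly (hj : j ∈ Set.Icc (-N : ℤ) N) :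
    (fun θ : ℝ ↦ cos (j * θ)) ∈ trigPoly N := by
  rw [cos_int_mul_eq_smul_hartley]
  exact smul_mem _ _ (add_mem (hartley_mem_trigPoly hj) (hartley_neg_mem_trigPoly hj))

theorem sin_int_mul_mem_trigPoly (hj : j ∈ Set.Icc (-N : ℤ) N) :
    (fun θ : ℝ ↦ sin (j * θ)) ∈ trigPoly N := by
  rw [sin_int_mul_eq_smul_hartley]
  exact smul_mem _ _ (sub_mem (hartley_mem_trigPoly hj) (hartley_neg_mem_trigPoly hj))

end trigPoly

theorem trigPoly_zero : trigPoly 0 = 1 := by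
  simp [trigPoly, hartley_zero, one_eq_span]

theorem trigPoly_mul_le (M N : ℕ) : trigPoly M * trigPoly N ≤ trigPoly (M + N) := by
  rw [trigPoly, trigPoly, span_mul_span, span_le]
  rintro _ ⟨_, ⟨a, ⟨ha, ha'⟩, rfl⟩, _, ⟨b, ⟨hb, hb'⟩, rfl⟩, rfl⟩
  have product_formula : hartley a * hartley b =
      (fun θ ↦ cos ((a - b : ℤ) * θ)) + fun θ ↦ sin ((a + b : ℤ) * θ) :=
    funext (hartley_mul_hartley a b)
  change hartley a * hartley b ∈ trigPoly (M + N)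
  rw [product_formula]
  exact add_mem (cos_int_mul_mem_trigPoly ⟨by grind, by grind⟩)
    (sin_int_mul_mem_trigPoly ⟨by grind, by grind⟩)

theorem trigPoly_add_le (M N : ℕ) : trigPoly (M + N) ≤ trigPoly M * trigPoly N := by
  refine span_le.2 ?_
  rintro _ ⟨j, ⟨hj, hj'⟩, rfl⟩
  obtain ⟨a, ha, b, hb, rfl⟩ : ∃ a ∈ Set.Icc (-M : ℤ) M, ∃ b ∈ Set.Icc (-N : ℤ) N, a + b = j :=
    ⟨max (-M : ℤ) (min j M), by grind, j - max (-M : ℤ) (min j M), by grind, by ring⟩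
  have addition_formula : hartley (a + b) =
      (fun θ ↦ cos (a * θ)) * hartley b + (fun θ ↦ sin (a * θ)) * hartley (-b) :=
    funext (hartley_add a b)
  rw [addition_formula]
  exact add_mem
    (mul_mem_mul (cos_int_mul_mem_trigPoly ha) (hartley_mem_trigPoly hb))
    (mul_mem_mul (sin_int_mul_mem_trigPoly ha) (hartley_neg_mem_trigPoly hb))

theorem trigPoly_add (M N : ℕ) : trigPoly (M + N) = trigPoly M * trigPoly N :=
  (trigPoly_add_le M N).antisymm (trigPoly_mul_le M N)

theorem trigPoly_pow (k n : ℕ) : trigPoly k ^ n = trigPoly (k * n) := by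
  induction n with
  | zero => rw [pow_zero, mul_zero, trigPoly_zero]
  | succ n ih => rw [pow_succ, ih, mul_add_one, trigPoly_add]

/-- The trigonometric moment curve `θ ↦ (cos θ, …, cos kθ, sin θ, …, sin kθ)` in `ℝ^(2k)`.
Coordinates are indexed from `0`, so index `i` has frequency `i + 1` for `i < k` and `i - k + 1`
otherwise; the subtraction takes place in `ℝ`. -/
noncomputable def trigMomentCurve (k : ℕ) (θ : ℝ) (i : Fin (2 * k)) : ℝ :=
  if (i : ℕ) < k then cos (((i : ℕ) + 1) * θ) else sin ((((i : ℕ) - k) + 1) * θ)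

theorem image_Ico_eq_range_of_periodic {α β : Type*} [AddCommGroup α] [LinearOrder α]
    [IsOrderedAddMonoid α] [Archimedean α] {f : α → β} {c : α} (hf : Function.Periodic f c)
    (hc : 0 < c) (a : α) : f '' Set.Ico a (a + c) = Set.range f := by
  refine (Set.image_subset_range _ _).antisymm (Set.range_subset_iff.2 fun x ↦ ?_)
  obtain ⟨y, hy, hxy⟩ := hf.exists_mem_Ico hc x a
  exact ⟨y, hy, hxy.symm⟩

theorem trigMomentCurve_periodic (k : ℕ) : Function.Periodic (trigMomentCurve k) (2 * π) := by
  intro θ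
  ext i
  unfold trigMomentCurve
  split_ifs
  · convert cos_add_int_mul_two_pi (((i : ℕ) + 1) * θ) ((i : ℕ) + 1) using 2
    push_cast
    ring
  · convert sin_add_int_mul_two_pi ((((i : ℕ) - k) + 1) * θ) (((i : ℕ) - k) + 1) using 2
    push_cast
    ring

theorem trigMomentCurve_mem_trigPoly (k : ℕ) (i : Fin (2 * k)) :
    (fun θ ↦ trigMomentCurve k θ i) ∈ trigPoly k := by
  unfold trigMomentCurve
  split_ifs with hi
  · exact_mod_cast cos_int_mul_mem_trigPoly (N := k) (j := (i : ℕ) + 1) ⟨by grind, by grind⟩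
  · exact_mod_cast sin_int_mul_mem_trigPoly (N := k) (j := (i : ℕ) - k + 1) ⟨by grind, by grind⟩

theorem trigMomentCurve_apply_cos {k m : ℕ} (hm : m < k) (θ : ℝ) :
    trigMomentCurve k θ ⟨m, by omega⟩ = cos ((m + 1 : ℤ) * θ) := by
  simp [trigMomentCurve, hm]

theorem trigMomentCurve_apply_sin {k m : ℕ} (hm : m < k) (θ : ℝ) :
    trigMomentCurve k θ ⟨k + m, by omega⟩ = sin ((m + 1 : ℤ) * θ) := by
  simp [trigMomentCurve]

theorem hartley_mem_one_sup_span_trigMomentCurve {k : ℕ} {j : ℤ} (hj : j ∈ Set.Icc (-k : ℤ) k) :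
    hartley j ∈ 1 ⊔ span ℝ (Set.range fun i θ ↦ trigMomentCurve k θ i) := by
  obtain rfl | hj_ne := eq_or_ne j 0
  · exact mem_sup_left (hartley_zero ▸ Submodule.one_le.1 le_rfl)
  refine mem_sup_right ?_
  have coord_mem (i : Fin (2 * k)) : (fun θ ↦ trigMomentCurve k θ i) ∈
      span ℝ (Set.range fun i θ ↦ trigMomentCurve k θ i) :=
    subset_span ⟨i, rfl⟩
  obtain ⟨m, hm⟩ := Nat.exists_eq_succ_of_ne_zero (Int.natAbs_ne_zero.2 hj_ne)
  have hmk : m < k := by grind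
  have cos_mem := coord_mem ⟨m, by omega⟩
  have sin_mem := coord_mem ⟨k + m, by omega⟩
  simp only [trigMomentCurve_apply_cos hmk, trigMomentCurve_apply_sin hmk] at cos_mem sin_mem
  obtain rfl | rfl : j = m + 1 ∨ j = -(m + 1) := by omega
  · exact add_mem cos_mem sin_mem
  · convert sub_mem cos_mem sin_mem using 1
    exact funext (hartley_neg _)

theorem one_sup_span_trigMomentCurve (k : ℕ) :
    1 ⊔ span ℝ (Set.range fun i θ ↦ trigMomentCurve k θ i) = trigPoly k := by
  refine le_antisymm (sup_le ?_ ?_) (span_le.2 ?_)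
  · rw [Submodule.one_le, ← hartley_zero]
    exact hartley_mem_trigPoly (by simp)
  · exact span_le.2 (Set.range_subset_iff.2 (trigMomentCurve_mem_trigPoly k))
  · exact Set.image_subset_iff.2 fun j ↦ hartley_mem_one_sup_span_trigMomentCurve

/-- **Hilbert function of the trigonometric moment curve.** For `k ≥ 1` and `d = 2k`, the
curve `V = {(cos θ, …, cos kθ, sin θ, …, sin kθ) : θ ∈ [0, 2π)} ⊂ ℝ^d` (the first `k`
coordinates are cosines, the last `k` sines) has `HF_V(n) = d·n + 1`. -/
theorem stmt_16 (k n : ℕ) (hk : 1 ≤ k) :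
    HF {x : Fin (2 * k) → ℝ | ∃ θ ∈ Set.Ico (0 : ℝ) (2 * Real.pi),
          ∀ i : Fin (2 * k),
            x i = if (i : ℕ) < k then Real.cos (((i : ℕ) + 1) * θ)
              else Real.sin ((((i : ℕ) - k) + 1) * θ)} n =
      2 * k * n + 1 := by
  calc
    _ = HF (trigMomentCurve k '' Set.Ico 0 (2 * π)) n := by
      congr 1
      ext x
      simp only [Set.mem_image, Set.mem_ofPred_eq, funext_iff, trigMomentCurve, eq_comm]
    _ = HF (Set.range (trigMomentCurve k)) n := by
      rw [← image_Ico_eq_range_of_periodic (trigMomentCurve_periodic k) two_pi_pos 0, zero_add]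
    _ = Module.finrank ℝ ↥(trigPoly k ^ n) := by rw [HF_range, one_sup_span_trigMomentCurve]
    _ = Module.finrank ℝ (trigPoly (k * n)) := by rw [trigPoly_pow]
    _ = 2 * k * n + 1 := by rw [finrank_trigPoly, mul_assoc]
end
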